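/- arXiv:math/9610212 — 6 statements merged into one kernel-verified Lean document; each statement's English description precedes it below -/
import Mathlib

section
/- Let K be a compact, hereditary subset of P_<∞(ℕ) and let γ be a countable ordinal. If A ∈ K \ K^{(γ)} and ∅ ∈ K^{(γ)}, then there exists a ∈ A such that A(<a) ∈ K^{(γ)} and A(a) ∉ K^{(γ)}. Moreover, (K_A)^{(γ)} = ∅, where K_A = { B ∈ K : A ⊆ B }. -/
open Ordinal

/-- The first uncountable ordinal. -/
noncomputable def omega1 : Ordinal := (Cardinal.aleph 1).ord

/-- The set of natural numbers coded by a point of the Cantor space `2^ℕ = ℕ → Bool`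
(which carries the product topology). -/
def toSet (x : ℕ → Bool) : Set ℕ := {n | x n = true}

/-- The set of limit points (the derived set) of a set in a topological space. -/
def limitPts {X : Type*} [TopologicalSpace X] (K : Set X) : Set X :=
  {x | x ∈ closure (K \ {x})}

/-- The transfinite iterates `K^{(o)}` of the derived-set operation:
`K^{(0)} = K`, `K^{(o+1)} = (K^{(o)})'`, and `K^{(o)} = ⋂_{p < o} K^{(p)}` at limits. -/
noncomputable def derivIter {X : Type*} [TopologicalSpace X] (K : Set X) (o : Ordinal) :
    Set X :=
  Ordinal.limitRecOn o K (fun _ IH => limitPts IH)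
    (fun o _ IH => ⋂ (p : Ordinal) (h : p < o), IH p h)

theorem dI_zero {X : Type*} [TopologicalSpace X] (K : Set X) : derivIter K 0 = K := by
  unfold derivIter; rw [Ordinal.limitRecOn_zero]

theorem dI_succ {X : Type*} [TopologicalSpace X] (K : Set X) (o : Ordinal) :
    derivIter K (o + 1) = limitPts (derivIter K o) := by
  unfold derivIter; rw [Ordinal.limitRecOn_add_one]

theorem dI_lim {X : Type*} [TopologicalSpace X] (K : Set X) (o : Ordinal)
    (ho : Order.IsSuccLimit o) :
    derivIter K o = ⋂ (p : Ordinal) (_ : p < o), derivIter K p := by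
  unfold derivIter; rw [Ordinal.limitRecOn_limit _ _ _ _ ho]

theorem dI_sub {X : Type*} [TopologicalSpace X] (K : Set X) (hK : IsClosed K) (o : Ordinal) :
    derivIter K o ⊆ K := by
  induction o using Ordinal.limitRecOn with
  | zero => rw [dI_zero]
  | add_one o ih =>
    rw [dI_succ]
    intro x hx
    exact closure_minimal (Set.diff_subset.trans ih) hK hx
  | limit o ho ih =>
    rw [dI_lim K o ho]
    intro x hx
    simp only [Set.mem_iInter] at hx
    exact ih 0 ho.bot_lt (hx 0 ho.bot_lt)

theorem dI_mono {X : Type*} [TopologicalSpace X] {K L : Set X} (h : K ⊆ L) (o : Ordinal) :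
    derivIter K o ⊆ derivIter L o := by
  induction o using Ordinal.limitRecOn with
  | zero => rwa [dI_zero, dI_zero]
  | add_one o ih =>
    rw [dI_succ, dI_succ]
    intro x hx
    exact closure_mono (Set.diff_subset_diff_left ih) hx
  | limit o ho ih =>
    rw [dI_lim K o ho, dI_lim L o ho]
    intro x hx
    simp only [Set.mem_iInter] at hx ⊢
    exact fun p hp => ih p hp (hx p hp)

theorem mem_cl_iff (S : Set (ℕ → Bool)) (x : ℕ → Bool) :
    x ∈ closure S ↔ ∀ N : ℕ, ∃ z ∈ S, ∀ n < N, z n = x n := by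
  constructor
  · intro hx N
    rw [mem_closure_iff] at hx
    have ho : IsOpen (⋂ n ∈ Finset.range N, {z : ℕ → Bool | z n = x n}) := by
      apply isOpen_biInter_finset
      intro n _
      exact (isOpen_discrete ({x n} : Set Bool)).preimage (f := fun z : ℕ → Bool => z n) (continuous_apply n)
    obtain ⟨z, hz, hzS⟩ := hx _ ho (by simp)
    refine ⟨z, hzS, ?_⟩
    simpa using hz
  · intro h
    choose z hzS hz using h
    refine mem_closure_of_tendsto (f := z) (b := Filter.atTop) ?_ (Filter.Eventually.of_forall hzS)
    rw [tendsto_pi_nhds]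
    intro n
    apply tendsto_const_nhds.congr'
    filter_upwards [Filter.eventually_gt_atTop n] with N hN
    exact (hz N n hN).symm

theorem dI_her (K : Set (ℕ → Bool))
    (hKfin : ∀ x ∈ K, (toSet x).Finite) (hK : IsClosed K)
    (hKher : ∀ x y : ℕ → Bool, (∀ n, x n = true → y n = true) → y ∈ K → x ∈ K)
    (o : Ordinal) : ∀ x y : ℕ → Bool, (∀ n, x n = true → y n = true) →
      y ∈ derivIter K o → x ∈ derivIter K o := by
  induction o using Ordinal.limitRecOn with
  | zero => rwa [dI_zero]
  | add_one o ih =>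
    intro y x hyx hx
    obtain ⟨M, hM⟩ := (hKfin x (dI_sub K hK _ hx)).bddAbove
    rw [dI_succ] at hx ⊢
    have hx' := (mem_cl_iff _ _).1 hx
    refine (mem_cl_iff _ _).2 fun N => ?_
    obtain ⟨z, ⟨hz, hne⟩, hzx⟩ := hx' (max N (M + 1))
    have hMx : ∀ n, x n = true → n < M + 1 := fun n hn => Nat.lt_succ_of_le (hM hn)
    have hxz : ∀ n, x n = true → z n = true := fun n hn => by
      rw [hzx n (lt_max_of_lt_right (hMx n hn)), hn]
    refine ⟨fun n => y n || (z n && !x n), ⟨ih _ z ?_ hz, ?_⟩, ?_⟩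
    · intro n hn
      have := hxz n
      have := hyx n
      simp at hn
      tauto
    · intro h
      apply hne
      funext n
      have h1 := congrFun h n
      have := hxz n
      have := hyx n
      revert h1 this
      cases hy : y n <;> cases hzn : z n <;> cases hxn : x n <;> simp_all
    · intro n hn
      simp [hzx n (lt_max_of_lt_left hn)]
  | limit o ho ih =>
    intro x y hxy hy
    rw [dI_lim K o ho] at hy ⊢
    simp only [Set.mem_iInter] at hy ⊢
    exact fun p hp => ih p hp x y hxy (hy p hp)

/-- Let `K ⊆ P_<∞(ℕ)` (subsets of `ℕ` coded as points of the Cantor space `2^ℕ`) be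
compact and hereditary, and let `γ` be a countable ordinal.  If `A ∈ K \ K^{(γ)}` and
`∅ ∈ K^{(γ)}`, then there is `a ∈ A` with `A(<a) ∈ K^{(γ)}` and `A(a) ∉ K^{(γ)}`
(where `A(<a) = A ∩ [0,a)` and `A(a) = A ∩ [0,a]`).  Moreover `(K_A)^{(γ)} = ∅`,
where `K_A = {B ∈ K : A ⊆ B}`. -/
theorem exists_cut_point (K : Set (ℕ → Bool))
    (hKfin : ∀ x ∈ K, (toSet x).Finite)
    (hKcpt : IsCompact K)
    (hKher : ∀ x y : ℕ → Bool, (∀ n, x n = true → y n = true) → y ∈ K → x ∈ K)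
    (γ : Ordinal) (hγ : γ < omega1)
    (A : ℕ → Bool) (hA : A ∈ K) (hA' : A ∉ derivIter K γ)
    (hempty : (fun _ : ℕ => false) ∈ derivIter K γ) :
    (∃ a : ℕ, A a = true ∧
      (fun n => A n && decide (n < a)) ∈ derivIter K γ ∧
      (fun n => A n && decide (n ≤ a)) ∉ derivIter K γ) ∧
    derivIter {y ∈ K | ∀ n, A n = true → y n = true} γ = ∅ := by
  have hK : IsClosed K := hKcpt.isClosed
  have her := dI_her K hKfin hK hKher γ
  constructor
  · classical
    obtain ⟨M, hM⟩ := (hKfin A hA).bddAbove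
    have hex : ∃ m : ℕ, (fun n => A n && decide (n < m)) ∉ derivIter K γ := by
      refine ⟨M + 1, fun h => hA' (her _ _ ?_ h)⟩
      intro n hn
      have : n ≤ M := hM hn
      simp [hn]; omega
    have h1 := Nat.find_spec hex
    have h2 := fun m => Nat.find_min hex (m := m)
    generalize Nat.find hex = m at h1 h2
    cases m with
    | zero => exact absurd (by simpa using hempty) h1
    | succ a =>
      have h3 := not_not.1 (h2 a (Nat.lt_succ_self a))
      refine ⟨a, ?_, h3, ?_⟩
      · by_contra hAa
        refine h1 (her _ _ ?_ h3)
        intro n hn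
        simp only [Bool.and_eq_true, decide_eq_true_eq] at hn ⊢
        refine ⟨hn.1, ?_⟩
        rcases Nat.lt_succ_iff_lt_or_eq.1 hn.2 with h | h
        · exact h
        · subst h; exact absurd hn.1 hAa
      · simpa only [Nat.lt_succ_iff] using h1
  · rw [Set.eq_empty_iff_forall_notMem]
    intro B hB
    have hcl : IsClosed {y ∈ K | ∀ n, A n = true → y n = true} := by
      have : {y ∈ K | ∀ n, A n = true → y n = true} =
          K ∩ ⋂ n, ⋂ (_ : A n = true), {y : ℕ → Bool | y n = true} := by
        ext y; simp
      rw [this]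
      refine hK.inter (isClosed_iInter fun n => isClosed_iInter fun _ => ?_)
      exact isClosed_eq (continuous_apply n) continuous_const
    exact hA' (her A B (dI_sub _ hcl γ hB).2 (dI_mono (Set.sep_subset _ _) γ hB))
end

section
/- Let M be a nondegenerate Orlicz function and suppose there exists η > 0 such that lim_{t→0} M(ηt)/M(t) = 0. Then there is a real sequence (δ_n)_{n≥1} strictly decreasing to 0 such that whenever a = (a_k) is an element of h_M with ‖a‖ = 1/η, either sup_k |a_k| > δ_1, or there exists n ∈ ℕ such that ‖a χ_{A_n}‖ ≥ 1, where A_n = { k : δ_{n+1} < |a_k| ≤ δ_n } and a χ_{A_n} denotes the sequence equal to a on A_n and 0 elsewhere. -/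
open Ordinal Filter Topology

/-- Membership in the Orlicz sequence space `h_M` : `Σₖ M (c * |aₖ|) < ∞` for every
`c < ∞`. -/
def MemHM (M : ℝ → ℝ) (a : ℕ → ℝ) : Prop :=
  ∀ c : ℝ, Summable fun k => M (c * |a k|)

/-- The Orlicz norm `‖a‖_M = inf { ρ > 0 : Σₖ M (|aₖ| / ρ) ≤ 1 }`. -/
noncomputable def orliczNorm (M : ℝ → ℝ) (a : ℕ → ℝ) : ℝ :=
  sInf {ρ : ℝ | 0 < ρ ∧ (∑' k, M (|a k| / ρ)) ≤ 1}

/-- `M` is a nondegenerate Orlicz function : increasing and convex on `[0, ∞)` with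
`M 0 = 0`, `M 1 = 1`, and `M t > 0` for all `t > 0`. -/
structure IsOrlicz (M : ℝ → ℝ) : Prop where
  mono : MonotoneOn M (Set.Ici 0)
  convex : ConvexOn ℝ (Set.Ici 0) M
  zero : M 0 = 0
  one : M 1 = 1
  pos : ∀ t : ℝ, 0 < t → 0 < M t

theorem orl_nonneg {M : ℝ → ℝ} (hM : IsOrlicz M) {t : ℝ} (ht : 0 ≤ t) : 0 ≤ M t := by
  rcases ht.eq_or_lt with h | h
  · rw [← h, hM.zero]
  · exact (hM.pos t h).le

theorem orl_sum_le_one {M : ℝ → ℝ} (hM : IsOrlicz M) (b : ℕ → ℝ)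
    (hb : ∀ c : ℝ, 0 ≤ c → Summable fun k => M (c * |b k|))
    (h : orliczNorm M b < 1) : ∑' k, M |b k| ≤ 1 := by
  have hs1 : Summable fun k => M |b k| := by simpa using hb 1 zero_le_one
  have hne : {ρ : ℝ | 0 < ρ ∧ (∑' k, M (|b k| / ρ)) ≤ 1}.Nonempty := by
    set ρ : ℝ := max 1 (∑' k, M |b k|) with hρ
    have h1 : 1 ≤ ρ := le_max_left _ _
    have h0 : 0 < ρ := by linarith
    refine ⟨ρ, h0, ?_⟩
    have hle : ∀ k, M (|b k| / ρ) ≤ ρ⁻¹ * M |b k| := by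
      intro k
      have hi : ρ⁻¹ ≤ 1 := inv_le_one_of_one_le₀ h1
      have := hM.convex.2 (show |b k| ∈ Set.Ici (0:ℝ) by simp) (show (0:ℝ) ∈ Set.Ici (0:ℝ) by simp)
        (show 0 ≤ ρ⁻¹ by positivity) (show 0 ≤ 1 - ρ⁻¹ by linarith) (by ring)
      simp only [_root_.smul_eq_mul, mul_zero, add_zero, hM.zero] at this
      rwa [mul_comm ρ⁻¹ |b k|, ← div_eq_mul_inv] at this
    have hs : Summable fun k => M (|b k| / ρ) := by
      have := hb ρ⁻¹ (by positivity)
      refine this.congr fun k => ?_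
      rw [div_eq_mul_inv, mul_comm]
    calc ∑' k, M (|b k| / ρ) ≤ ∑' k, ρ⁻¹ * M |b k| :=
          hs.tsum_le_tsum hle (hs1.mul_left _)
      _ = ρ⁻¹ * ∑' k, M |b k| := tsum_mul_left
      _ ≤ ρ⁻¹ * ρ := by gcongr; exact le_max_right _ _
      _ = 1 := inv_mul_cancel₀ h0.ne'
  obtain ⟨ρ, ⟨h0, hρ⟩, hlt⟩ := exists_lt_of_csInf_lt hne h
  have hs : Summable fun k => M (|b k| / ρ) := by
    have := hb ρ⁻¹ (by positivity)
    refine this.congr fun k => ?_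
    rw [div_eq_mul_inv, mul_comm]
  refine le_trans (hs1.tsum_le_tsum (fun k => ?_) hs) hρ
  refine hM.mono (by simp) (by simp; positivity) ?_
  exact le_div_self (abs_nonneg _) h0 hlt.le

theorem orl_half {M : ℝ → ℝ} (hM : IsOrlicz M) (η : ℝ) (hη : 0 < η) (a : ℕ → ℝ)
    (ha : MemHM M a) (hn : orliczNorm M a = 1 / η) : 1/2 < ∑' k, M (η * |a k|) := by
  by_contra! hle
  set C := ∑' k, M (2 * η * |a k|) with hC
  have hC0 : 0 ≤ C := tsum_nonneg fun k => orl_nonneg hM (by positivity)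
  set e : ℝ := 1 / (2 * (C + 1)) with he
  have he0 : 0 < e := by positivity
  have he1 : e ≤ 1/2 := by
    rw [he]; apply one_div_le_one_div_of_le <;> linarith
  have heC : e * C ≤ 1/2 := by
    rw [he, one_div_mul_eq_div, div_le_iff₀ (by positivity)]; linarith
  have hpt : ∀ k, M ((1 + e) * η * |a k|) ≤ (1 - e) * M (η * |a k|) + e * M (2 * η * |a k|) := by
    intro k
    have := hM.convex.2 (show η * |a k| ∈ Set.Ici (0:ℝ) from Set.mem_Ici.2 (by positivity))
      (show 2 * η * |a k| ∈ Set.Ici (0:ℝ) from Set.mem_Ici.2 (by positivity))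
      (show 0 ≤ 1 - e by linarith) he0.le (by ring)
    simp only [_root_.smul_eq_mul] at this
    have heq : (1 + e) * η * |a k| = (1 - e) * (η * |a k|) + e * (2 * η * |a k|) := by ring
    rw [heq]
    exact this
  have hsum : ∑' k, M ((1 + e) * η * |a k|) ≤ 1 := by
    calc _ ≤ ∑' k, ((1 - e) * M (η * |a k|) + e * M (2 * η * |a k|)) :=
          (ha _).tsum_le_tsum hpt (((ha _).mul_left _).add ((ha _).mul_left _))
      _ = (1 - e) * (∑' k, M (η * |a k|)) + e * C := by
          rw [((ha η).mul_left _).tsum_add ((ha (2 * η)).mul_left _), tsum_mul_left, tsum_mul_left]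
      _ ≤ 1 := by nlinarith
  have : orliczNorm M a ≤ 1 / ((1 + e) * η) := by
    refine csInf_le ⟨0, fun x hx => hx.1.le⟩ ⟨by positivity, ?_⟩
    convert hsum using 4 with k
    rw [div_div_eq_mul_div, _root_.div_one, mul_comm]
  rw [hn] at this
  have h2 : 1 / ((1 + e) * η) < 1 / η := by
    apply one_div_lt_one_div_of_lt hη
    nlinarith
  linarith

theorem exists_seq_aux (M : ℝ → ℝ) (hM : IsOrlicz M)
    (η : ℝ)
    (hlim : Tendsto (fun t => M (η * t) / M t) (𝓝[>] (0 : ℝ)) (𝓝 0)) :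
    ∃ δ : ℕ → ℝ, StrictAnti δ ∧ (∀ n, 0 < δ n) ∧ Tendsto δ atTop (𝓝 (0 : ℝ)) ∧
      ∀ n t, 0 < t → t ≤ δ n → M (η * t) ≤ (1/2)^(n+2) * M t := by
  have hev : ∀ n : ℕ, ∀ᶠ m : ℕ in atTop, ∀ t, 0 < t → t ≤ 1 / ((m : ℝ) + 1) →
      M (η * t) ≤ (1/2)^(n+2) * M t := by
    intro n
    have h1 : ∀ᶠ t in 𝓝[>] (0 : ℝ), M (η * t) / M t < (1/2)^(n+2) :=
      hlim.eventually (gt_mem_nhds (by positivity))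
    obtain ⟨u, hu, hsub⟩ := mem_nhdsGT_iff_exists_Ioo_subset.1 h1
    have h2 := tendsto_one_div_add_atTop_nhds_zero_nat (𝕜 := ℝ)
    filter_upwards [h2.eventually (gt_mem_nhds (show (0:ℝ) < u from hu))] with m hm t ht htm
    have h3 : M (η * t) / M t < (1/2)^(n+2) := hsub ⟨ht, lt_of_le_of_lt htm hm⟩
    exact ((div_lt_iff₀ (hM.pos t ht)).1 h3).le
  obtain ⟨φ, hφ, hp⟩ := extraction_forall_of_eventually hev
  refine ⟨fun n => 1 / ((φ n : ℝ) + 1), ?_, fun n => by positivity, ?_, hp⟩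
  · intro i j hij
    have : (φ i : ℝ) < φ j := by exact_mod_cast hφ hij
    exact one_div_lt_one_div_of_lt (by positivity) (by linarith)
  · exact (tendsto_one_div_add_atTop_nhds_zero_nat (𝕜 := ℝ)).comp hφ.tendsto_atTop

/-- Let `M` be a nondegenerate Orlicz function with `lim_{t→0} M(ηt)/M(t) = 0` for some
`η > 0`.  Then there is a sequence `(δₙ)` strictly decreasing to `0` such that for every
`a ∈ h_M` with `‖a‖ = 1/η`, either `sup |aₖ| > δ₁`, or `‖a χ_{Aₙ}‖ ≥ 1` for some `n`,
where `Aₙ = { k : δ_{n+1} < |aₖ| ≤ δₙ }`. -/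
theorem exists_levels (M : ℝ → ℝ) (hM : IsOrlicz M)
    (η : ℝ) (hη : 0 < η)
    (hlim : Tendsto (fun t => M (η * t) / M t) (𝓝[>] (0 : ℝ)) (𝓝 0)) :
    ∃ δ : ℕ → ℝ, StrictAnti δ ∧ (∀ n, 0 < δ n) ∧ Tendsto δ atTop (𝓝 (0 : ℝ)) ∧
      ∀ a : ℕ → ℝ, MemHM M a → orliczNorm M a = 1 / η →
        (∃ k, δ 0 < |a k|) ∨
        ∃ n : ℕ, 1 ≤ orliczNorm M
          (Set.indicator {k | δ (n + 1) < |a k| ∧ |a k| ≤ δ n} a) := by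
  obtain ⟨δ, hanti, hpos, hδ, hlev⟩ := exists_seq_aux M hM η hlim
  refine ⟨δ, hanti, hpos, hδ, fun a ha hn => ?_⟩
  by_contra! hcon
  obtain ⟨hsup, hnorm⟩ := hcon
  set A : ℕ → Set ℕ := fun n => {k | δ (n + 1) < |a k| ∧ |a k| ≤ δ n} with hA
  have hbs : ∀ n (c : ℝ), 0 ≤ c → Summable fun k => M (c * |(A n).indicator a k|) := by
    intro n c hc
    refine Summable.of_nonneg_of_le (fun k => orl_nonneg hM (by positivity)) (fun k => ?_) (ha c)
    refine hM.mono (by simp; positivity) (by simp; positivity) ?_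
    refine mul_le_mul_of_nonneg_left ?_ hc
    by_cases hk : k ∈ A n <;> simp [hk]
  have hone : ∀ n, ∑' k, M |(A n).indicator a k| ≤ 1 := fun n =>
    orl_sum_le_one hM _ (hbs n) (hnorm n)
  have hex : ∀ k, ∃ n, a k ≠ 0 → k ∈ A n := by
    intro k
    by_cases h0 : a k = 0
    · exact ⟨0, fun h => absurd h0 h⟩
    have hp : 0 < |a k| := abs_pos.2 h0
    have hx : ∃ n, δ n < |a k| := (hδ.eventually (gt_mem_nhds hp)).exists
    classical
    have hf := Nat.find_spec hx
    rcases hm : Nat.find hx with _ | m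
    · rw [hm] at hf
      exact absurd hf (not_lt.2 (hsup k))
    · rw [hm] at hf
      exact ⟨m, fun _ => ⟨hf, not_lt.1 (Nat.find_min hx (by omega))⟩⟩
  choose ν hν using hex
  have hpt : ∀ k, M (η * |a k|) ≤ (1/2)^(ν k + 2) * M |(A (ν k)).indicator a k| := by
    intro k
    by_cases h0 : a k = 0
    · by_cases hk : k ∈ A (ν k) <;> simp [hk, h0, hM.zero]
    · have hk := hν k h0
      rw [Set.indicator_of_mem hk]
      exact hlev _ _ (abs_pos.2 h0) hk.2
  have hfin : ∑' k, M (η * |a k|) ≤ 1/2 := by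
    refine (ha η).tsum_le_of_sum_le fun F => ?_
    set N := F.sup ν + 1
    have hN : ∀ k ∈ F, ν k ∈ Finset.range N := fun k hk =>
      Finset.mem_range.2 (Nat.lt_succ_of_le (Finset.le_sup hk))
    calc ∑ k ∈ F, M (η * |a k|)
        ≤ ∑ k ∈ F, ∑ n ∈ Finset.range N, (1/2)^(n + 2) * M |(A n).indicator a k| := by
          refine Finset.sum_le_sum fun k hk => (hpt k).trans ?_
          exact Finset.single_le_sum
            (f := fun n => (1/2 : ℝ)^(n + 2) * M |(A n).indicator a k|)
            (fun n _ => mul_nonneg (by positivity) (orl_nonneg hM (abs_nonneg _))) (hN k hk)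
      _ = ∑ n ∈ Finset.range N, (1/2)^(n + 2) * ∑ k ∈ F, M |(A n).indicator a k| := by
          rw [Finset.sum_comm]
          simp only [Finset.mul_sum]
      _ ≤ ∑ n ∈ Finset.range N, (1/2 : ℝ)^(n + 2) := by
          refine Finset.sum_le_sum fun n _ => mul_le_of_le_one_right (by positivity) ?_
          refine le_trans (Summable.sum_le_tsum F
            (fun k _ => orl_nonneg hM (abs_nonneg _)) ?_) (hone n)
          simpa using hbs n 1 zero_le_one
      _ = (1/4) * ∑ n ∈ Finset.range N, (1/2 : ℝ)^n := by
          rw [Finset.mul_sum]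
          refine Finset.sum_congr rfl fun n _ => ?_
          ring
      _ ≤ 1/2 := by
          have := sum_geometric_two_le N
          linarith
  exact absurd (orl_half hM η hη a ha hn) (not_lt.2 hfin)
end

section
/- Let M be a nondegenerate Orlicz function. Suppose there exists η > 0 such that lim_{t→0} M(ηt)/M(t) = 0. Then the Orlicz sequence space h_M is isomorphic to a closed subspace of C(ω^ω). -/
open Ordinal Filter Topology

/-- `C(α)` : the Banach space of continuous real functions on the compact space
`α + 1 = [0, α]` (every continuous function on a compact space is bounded, so this is
the space of bounded continuous functions on `[0, α]` with the sup norm). -/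
noncomputable abbrev COrd (α : Ordinal) : Type 2 :=
  BoundedContinuousFunction ↥(Set.Iic α) ℝ

/-- `h_M` embeds isomorphically into `C(α)` : there is a map `T`, linear on `h_M`,
which is bounded above and below with respect to the Orlicz norm. -/
noncomputable def EmbedsHM (M : ℝ → ℝ) (α : Ordinal) : Prop :=
  ∃ T : (ℕ → ℝ) → COrd α,
    (∀ a b : ℕ → ℝ, MemHM M a → MemHM M b → T (a + b) = T a + T b) ∧
    (∀ (c : ℝ) (a : ℕ → ℝ), MemHM M a → T (c • a) = c • T a) ∧
    ∃ c₁ > (0 : ℝ), ∃ c₂ > (0 : ℝ), ∀ a : ℕ → ℝ, MemHM M a →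
      c₁ * orliczNorm M a ≤ ‖T a‖ ∧ ‖T a‖ ≤ c₂ * orliczNorm M a

namespace OE

noncomputable def ev (M : ℝ → ℝ) (l : List (ℕ × ℕ)) (a : ℕ → ℝ) : ℝ :=
  (l.map fun p => M ((1/2)^p.2) * 2^p.2 * a p.1).sum

def Good (M : ℝ → ℝ) (l : List (ℕ × ℕ)) : Prop :=
  l.Pairwise (fun p q => p.1 < q.1) ∧ (l.map fun p => M ((1/2)^p.2)).sum ≤ 1

def Tail (M : ℝ → ℝ) (a : ℕ → ℝ) : Prop :=
  ∀ ε > 0, ∃ K : ℕ, ∀ l, Good M l → (∀ p ∈ l, K ≤ p.1) → |ev M l a| < ε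

def Cts (f : Ordinal → ℝ) (α : Ordinal) : Prop :=
  ∀ x ≤ α, 0 < x → ∀ ε > 0, ∃ y < x, ∀ z, y < z → z ≤ x → |f z - f x| < ε

theorem ev_append (M : ℝ → ℝ) (l l' : List (ℕ × ℕ)) (a : ℕ → ℝ) :
    ev M (l ++ l') a = ev M l a + ev M l' a := by simp [ev]

theorem ev_add (M : ℝ → ℝ) (l : List (ℕ × ℕ)) (a b : ℕ → ℝ) :
    ev M l (a + b) = ev M l a + ev M l b := by
  induction l with
  | nil => simp [ev]
  | cons p l ih => simp only [ev, List.map_cons, List.sum_cons, Pi.add_apply] at ih ⊢; rw [ih]; ring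

theorem ev_smul (M : ℝ → ℝ) (l : List (ℕ × ℕ)) (c : ℝ) (a : ℕ → ℝ) :
    ev M l (c • a) = c * ev M l a := by
  induction l with
  | nil => simp [ev]
  | cons p l ih =>
    simp only [ev, List.map_cons, List.sum_cons, Pi.smul_apply, _root_.smul_eq_mul] at ih ⊢; rw [ih]; ring

theorem Tail.add {M : ℝ → ℝ} {a b : ℕ → ℝ} (ha : Tail M a) (hb : Tail M b) : Tail M (a + b) := by
  intro ε hε
  obtain ⟨K, hK⟩ := ha (ε/2) (by positivity)
  obtain ⟨L, hL⟩ := hb (ε/2) (by positivity)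
  refine ⟨max K L, fun l hl h => ?_⟩
  rw [ev_add]
  have h1 := hK l hl (fun p hp => le_trans (le_max_left _ _) (h p hp))
  have h2 := hL l hl (fun p hp => le_trans (le_max_right _ _) (h p hp))
  exact lt_of_le_of_lt (abs_add_le _ _) (by linarith)

theorem Tail.smul {M : ℝ → ℝ} {a : ℕ → ℝ} (ha : Tail M a) (c : ℝ) : Tail M (c • a) := by
  intro ε hε
  obtain ⟨K, hK⟩ := ha (ε/(|c|+1)) (by positivity)
  refine ⟨K, fun l hl h => ?_⟩
  rw [ev_smul, abs_mul]
  have h1 := hK l hl h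
  rw [lt_div_iff₀ (by positivity)] at h1
  nlinarith [abs_nonneg (ev M l a), abs_nonneg c]

theorem Good.sublist {M : ℝ → ℝ} (hM : IsOrlicz M) {l l' : List (ℕ × ℕ)} (h : Good M l)
    (hs : l'.Sublist l) : Good M l' := by
  refine ⟨h.1.sublist hs, le_trans ?_ h.2⟩
  apply List.Sublist.sum_le_sum (hs.map _)
  intro x hx
  simp only [List.mem_map] at hx
  obtain ⟨p, _, rfl⟩ := hx
  exact (hM.pos _ (by positivity)).le

theorem glue (M : ℝ → ℝ) (hM : IsOrlicz M) (u β : ℕ → Ordinal) (α : Ordinal) (hα : 0 < α)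
    (u0 : u 0 = 0)
    (us : ∀ m, u (m+1) = u m + β m) (ult : ∀ m, u m < α) (ucof : ∀ x < α, ∃ m, x ≤ u m)
    (Ψ : ℕ → Ordinal → List (ℕ × ℕ)) (l0 : List (ℕ × ℕ)) (r : ℕ → ℕ) (hr : Tendsto r atTop atTop)
    (hΨ : ∀ m x, ∃ c, Ψ m x = l0 ++ c ∧ Good M c ∧ ∀ p ∈ c, r m ≤ p.1)
    (hc : ∀ m a, Tail M a → Cts (fun x => ev M (Ψ m x) a) (β m)) :
    ∃ Φ : Ordinal → List (ℕ × ℕ),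
      (∀ x, Φ x = l0 ∨ ∃ m y, Φ x = Ψ m y) ∧
      (∀ m y, 0 < y → y ≤ β m → ∃ x, 0 < x ∧ x ≤ α ∧ Φ x = Ψ m y) ∧
      (∃ x, 0 < x ∧ x ≤ α ∧ Φ x = l0) ∧
      ∀ a, Tail M a → Cts (fun x => ev M (Φ x) a) α := by
  classical
  have um : Monotone u := monotone_nat_of_le_succ (fun m => by rw [us]; exact le_self_add)
  have ex : ∀ x, x < α → ∃ m, x ≤ u (m+1) := fun x hx => by
    obtain ⟨m, hm⟩ := ucof x hx
    exact ⟨m, hm.trans (um (Nat.le_succ m))⟩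
  let Φ : Ordinal → List (ℕ × ℕ) := fun x =>
    if h : x < α ∧ 0 < x then Ψ (Nat.find (ex x h.1)) (x - u (Nat.find (ex x h.1))) else l0
  have hΦ : ∀ m y, 0 < y → y ≤ β m → Φ (u m + y) = Ψ m y := by
    intro m y hy hyb
    have hlt : u m + y < α := lt_of_le_of_lt (by rw [us]; gcongr) (ult (m+1))
    have hpos : 0 < u m + y := lt_of_lt_of_le hy (by simp)
    have hf : Nat.find (ex _ hlt) = m := by
      rw [Nat.find_eq_iff]
      refine ⟨by rw [us]; gcongr, fun n hn h => ?_⟩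
      have h1 : u m + y ≤ u m := h.trans (um hn)
      have h2 : u m < u m + y := by simpa using hy
      exact absurd h1 (not_le.2 h2)
    have : Φ (u m + y) = Ψ (Nat.find (ex _ hlt)) (u m + y - u (Nat.find (ex _ hlt))) :=
      dif_pos ⟨hlt, hpos⟩
    rw [this, hf, Ordinal.add_sub_cancel]
  have hrep : ∀ x, x < α → 0 < x → ∃ m y, 0 < y ∧ y ≤ β m ∧ x = u m + y := by
    intro x hx hx0
    have h1 := Nat.find_spec (ex x hx)
    have h2 : u (Nat.find (ex x hx)) < x := by
      rcases Nat.eq_zero_or_pos (Nat.find (ex x hx)) with h | h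
      · rw [h, u0]; exact hx0
      · have := Nat.find_min (ex x hx) (Nat.sub_lt h one_pos)
        rw [show Nat.find (ex x hx) - 1 + 1 = Nat.find (ex x hx) from Nat.sub_add_cancel h] at this
        exact not_le.1 this
    set m := Nat.find (ex x hx)
    refine ⟨m, x - u m, ?_, ?_, (Ordinal.add_sub_cancel_of_le h2.le).symm⟩
    · rw [Ordinal.lt_sub]; simpa using h2
    · rw [Ordinal.sub_le, ← us]; exact h1
  have hΦα : Φ α = l0 := dif_neg (by simp)
  refine ⟨Φ, ?_, ?_, ⟨α, hα, le_rfl, hΦα⟩, ?_⟩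
  · intro x
    by_cases h : x < α ∧ 0 < x
    · obtain ⟨m, y, hy, hyb, rfl⟩ := hrep x h.1 h.2
      exact Or.inr ⟨m, y, hΦ m y hy hyb⟩
    · exact Or.inl (dif_neg h)
  · intro m y hy hyb
    exact ⟨u m + y, lt_of_lt_of_le hy (by simp),
      (lt_of_le_of_lt (by rw [us]; gcongr) (ult (m+1))).le, hΦ m y hy hyb⟩
  · intro a ha x hx hx0 ε hε
    rcases hx.eq_or_lt with rfl | hx
    · obtain ⟨K, hK⟩ := ha ε hε
      obtain ⟨m0, hm0⟩ := (tendsto_atTop.1 hr K).exists_forall_of_atTop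
      refine ⟨u m0, ult m0, fun z hz hzx => ?_⟩
      simp only [hΦα]
      rcases hzx.eq_or_lt with rfl | hzx
      · simpa [hΦα] using hε
      · obtain ⟨m, y, hy, hyb, rfl⟩ := hrep z hzx (lt_of_le_of_lt (zero_le) hz)
        rw [hΦ m y hy hyb]
        obtain ⟨c, h1, h2, h3⟩ := hΨ m y
        rw [h1, ev_append, add_sub_cancel_left]
        have hmm : m0 ≤ m := by
          by_contra hcon
          have h5 : u (m+1) ≤ u m0 := um (by omega)
          have h4 : u m + y ≤ u (m+1) := by rw [us]; gcongr
          exact absurd (h4.trans h5) (not_le.2 hz)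
        exact hK c h2 (fun p hp => (hm0 m hmm).trans (h3 p hp))
    · obtain ⟨m, y, hy, hyb, rfl⟩ := hrep x hx hx0
      obtain ⟨y', hy', H⟩ := hc m a ha y hyb hy ε hε
      refine ⟨u m + y', by simpa using hy', fun z hz hzx => ?_⟩
      have hmz : u m ≤ z := le_trans (by simp) hz.le
      obtain ⟨w, rfl⟩ : ∃ w, z = u m + w := ⟨z - u m, (Ordinal.add_sub_cancel_of_le hmz).symm⟩
      have hw1 : y' < w := by simpa using hz
      have hw2 : w ≤ y := by simpa using hzx
      have := H w hw1 hw2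
      simp only [hΦ m y hy hyb, hΦ m w (lt_of_le_of_lt (zero_le) hw1) (hw2.trans hyb)]
      exact this

theorem tree (M : ℝ → ℝ) (hM : IsOrlicz M) (Q : ℕ) (n : ℕ) : ∀ (l0 : List (ℕ × ℕ)) (j : ℕ),
    Good M l0 → ∃ Φ : Ordinal → List (ℕ × ℕ),
      (∀ x, ∃ c, Φ x = l0 ++ c ∧ Good M (l0 ++ c) ∧ ∀ p ∈ c, j ≤ p.1) ∧
      (∀ c, Good M (l0 ++ c) → (∀ p ∈ c, j ≤ p.1 ∧ p.2 ≤ Q) → c.length ≤ n →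
        ∃ x, 0 < x ∧ x ≤ ω ^ (n : Ordinal) ∧ Φ x = l0 ++ c) ∧
      ∀ a, Tail M a → Cts (fun x => ev M (Φ x) a) (ω ^ (n : Ordinal)) := by
  have hconst : ∀ (l0 : List (ℕ × ℕ)) (a : ℕ → ℝ) (α : Ordinal), Cts (fun _ => ev M l0 a) α := by
    intro l0 a α x hx hx0 ε hε
    exact ⟨0, hx0, fun z _ _ => by simpa using hε⟩
  induction n with
  | zero =>
    intro l0 j h0
    refine ⟨fun _ => l0, fun x => ⟨[], by simp, by simpa using h0, by simp⟩, ?_, ?_⟩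
    · intro c _ _ hc
      have : c = [] := List.length_eq_zero_iff.1 (by omega)
      subst this
      exact ⟨1, zero_lt_one, by simp, by simp⟩
    · intro a _; exact hconst _ _ _
  | succ n ih =>
    intro l0 j h0
    have hb : ∀ m : ℕ, ∃ Ψ : Ordinal → List (ℕ × ℕ),
        (∀ x, ∃ c, Ψ x = l0 ++ c ∧ Good M (l0 ++ c) ∧ ∀ p ∈ c, j + m / (Q+1) ≤ p.1) ∧
        (∀ c, Good M (l0 ++ ((j + m / (Q+1), m % (Q+1)) :: c)) → 
          (∀ p ∈ c, p.2 ≤ Q) → c.length ≤ n →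
          ∃ x, 0 < x ∧ x ≤ ω ^ (n : Ordinal) ∧
            Ψ x = l0 ++ ((j + m / (Q+1), m % (Q+1)) :: c)) ∧
        ∀ a, Tail M a → Cts (fun x => ev M (Ψ x) a) (ω ^ (n : Ordinal)) := by
      intro m
      set k := j + m / (Q+1)
      set q := m % (Q+1)
      by_cases hg : Good M (l0 ++ [(k, q)])
      · obtain ⟨Ψ, h1, h2, h3⟩ := ih (l0 ++ [(k, q)]) (k+1) hg
        refine ⟨Ψ, ?_, ?_, h3⟩
        · intro x
          obtain ⟨c, hc1, hc2, hc3⟩ := h1 x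
          refine ⟨(k, q) :: c, by simpa using hc1, by simpa using hc2, ?_⟩
          intro p hp
          rcases List.mem_cons.1 hp with rfl | hp
          · exact le_rfl
          · exact (Nat.le_succ k).trans (hc3 p hp)
        · intro c hc hcq hcl
          have := h2 c (by simpa using hc) (fun p hp => ⟨?_, hcq p hp⟩) hcl
          · simpa using this
          · have := (List.pairwise_append.1 hc.1).2.1
            exact (List.pairwise_cons.1 this).1 p hp
      · refine ⟨fun _ => l0, fun x => ⟨[], by simp, by simpa using h0, by simp⟩, ?_, ?_⟩
        · intro c hc
          exact absurd (hc.sublist hM (by simp)) hg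
        · intro a _; exact hconst _ _ _
    choose Ψ hΨ1 hΨ2 hΨ3 using hb
    obtain ⟨Φ, g1, g2, g3, g4⟩ := glue M hM (fun m => ω ^ (n : Ordinal) * (m : Ordinal))
      (fun _ => ω ^ (n : Ordinal)) (ω ^ ((n+1 : ℕ) : Ordinal)) (opow_pos _ omega0_pos) (by simp)
      (fun m => by rw [Nat.cast_succ, mul_add_one]) 
      (fun m => by
        rw [Nat.cast_succ, opow_add, opow_one]
        exact (mul_lt_mul_iff_right₀ (opow_pos _ omega0_pos)).2 (natCast_lt_omega0 m))
      (fun x hx => by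
        rw [Nat.cast_succ, opow_add, opow_one] at hx
        obtain ⟨y, hy, hxy⟩ := (lt_mul_iff_of_isSuccLimit isSuccLimit_omega0).1 hx
        obtain ⟨m, rfl⟩ := lt_omega0.1 hy
        exact ⟨m, hxy.le⟩)
      Ψ l0 (fun m => j + m / (Q+1)) 
      (tendsto_atTop_mono (fun m => Nat.le_add_left _ _) (Nat.tendsto_div_const_atTop (Nat.succ_ne_zero Q)))
      (fun m x => by
        obtain ⟨c, hc1, hc2, hc3⟩ := hΨ1 m x
        exact ⟨c, hc1, hc2.sublist hM (List.sublist_append_right _ _), hc3⟩)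
      hΨ3
    refine ⟨Φ, ?_, ?_, g4⟩
    · intro x
      rcases g1 x with h | ⟨m, y, h⟩
      · exact ⟨[], by simpa using h, by simpa using h0, by simp⟩
      · obtain ⟨c, hc1, hc2, hc3⟩ := hΨ1 m y
        exact ⟨c, h.trans hc1, hc2, fun p hp => le_trans (Nat.le_add_right _ _) (hc3 p hp)⟩
    · intro c hc hcj hcl
      rcases c with _ | ⟨⟨k, q⟩, c⟩
      · simpa using g3
      · have hkq := hcj (k, q) (by simp)
        simp only at hkq
        have e1 : j + ((k - j) * (Q+1) + q) / (Q+1) = k := by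
          rw [mul_comm, Nat.mul_add_div (by omega), Nat.div_eq_of_lt (by omega)]; omega
        have e2 : ((k - j) * (Q+1) + q) % (Q+1) = q := by
          rw [mul_comm, Nat.mul_add_mod, Nat.mod_eq_of_lt (by omega)]
        obtain ⟨y, hy0, hy, hyy⟩ := hΨ2 ((k - j) * (Q+1) + q) c (by rw [e1, e2]; exact hc)
          (fun p hp => (hcj p (by simp [hp])).2) (by simpa using hcl)
        rw [e1, e2] at hyy
        obtain ⟨x, hx0, hx, hxx⟩ := g2 _ y hy0 hy
        exact ⟨x, hx0, hx, hxx.trans hyy⟩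

theorem top (M : ℝ → ℝ) (hM : IsOrlicz M) (Q N : ℕ → ℕ) (hN : ∀ i, i ≤ N i) :
    ∃ Φ : Ordinal → List (ℕ × ℕ),
      (∀ x, Good M (Φ x)) ∧
      (∀ i c, Good M c → (∀ p ∈ c, i ≤ p.1 ∧ p.2 ≤ Q i) → c.length ≤ N i →
        ∃ x, x ≤ ω ^ ω ∧ Φ x = c) ∧
      ∀ a, Tail M a → Cts (fun x => ev M (Φ x) a) (ω ^ ω) := by
  have hnil : Good M [] := ⟨by simp, by simp⟩
  have := fun i => tree M hM (Q i) (N i) [] i hnil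
  choose Ψ h1 h2 h3 using this
  let u : ℕ → Ordinal := fun m => Nat.rec 0 (fun i x => x + ω ^ (N i : Ordinal)) m
  have us : ∀ m, u (m+1) = u m + ω ^ (N m : Ordinal) := fun m => rfl
  have hlt : ∀ n : ℕ, (ω : Ordinal) ^ (n : Ordinal) < ω ^ ω := fun n =>
    (opow_lt_opow_iff_right one_lt_omega0).2 (natCast_lt_omega0 n)
  obtain ⟨Φ, g1, g2, g3, g4⟩ := glue M hM u (fun i => ω ^ (N i : Ordinal)) (ω ^ ω)
    (opow_pos _ omega0_pos) rfl us
    (fun m => by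
      induction m with
      | zero => exact opow_pos _ omega0_pos
      | succ m ih => rw [us]; exact isPrincipal_add_omega0_opow _ ih (hlt _))
    (fun x hx => by
      obtain ⟨d, hd, h⟩ := (lt_opow_of_isSuccLimit omega0_ne_zero isSuccLimit_omega0).1 hx
      obtain ⟨n, rfl⟩ := lt_omega0.1 hd
      refine ⟨n+1, ?_⟩
      rw [us]
      refine h.le.trans (le_trans ?_ le_add_self)
      exact opow_le_opow_right omega0_pos (by exact_mod_cast hN n))
    Ψ [] id tendsto_id
    (fun m x => by
      obtain ⟨c, hc1, hc2, hc3⟩ := h1 m x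
      exact ⟨c, hc1, by simpa using hc2, hc3⟩)
    h3
  refine ⟨Φ, ?_, ?_, g4⟩
  · intro x
    rcases g1 x with h | ⟨m, y, h⟩
    · rw [h]; exact hnil
    · obtain ⟨c, hc1, hc2, hc3⟩ := h1 m y
      rw [h, hc1]; exact hc2
  · intro i c hc hci hcl
    obtain ⟨y, hy0, hy, hyc⟩ := h2 i c (by simpa using hc) hci hcl
    obtain ⟨x, hx0, hx, hxx⟩ := g2 i y hy0 hy
    exact ⟨x, hx, by rw [hxx, hyc]; simp⟩

theorem Cts.continuous {f : Ordinal → ℝ} {α : Ordinal} (h : Cts f α) :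
    Continuous (fun x : ↥(Set.Iic α) => f x) := by
  rw [continuous_iff_continuousAt]
  rintro ⟨x, hx⟩
  rw [Metric.continuousAt_iff']
  intro ε hε
  rcases (zero_le (a := x)).eq_or_lt with rfl | hx0
  · have : ∀ᶠ z : ↥(Set.Iic α) in 𝓝 ⟨0, hx⟩, (z : Ordinal) < 1 :=
      continuous_subtype_val.continuousAt.eventually (Iio_mem_nhds (show (0 : Ordinal) < 1 from zero_lt_one))
    filter_upwards [this] with z hz
    rw [Ordinal.lt_one_iff_zero] at hz
    simp [hz, hε]
  · obtain ⟨y, hy, H⟩ := h x hx hx0 ε hε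
    have e1 : ∀ᶠ z : ↥(Set.Iic α) in 𝓝 ⟨x, hx⟩, y < (z : Ordinal) :=
      continuous_subtype_val.continuousAt.eventually (lt_mem_nhds hy)
    have e2 : ∀ᶠ z : ↥(Set.Iic α) in 𝓝 ⟨x, hx⟩, (z : Ordinal) < Order.succ x :=
      continuous_subtype_val.continuousAt.eventually (gt_mem_nhds (Order.lt_succ x))
    filter_upwards [e1, e2] with z h1 h2
    rw [Real.dist_eq]
    exact H z h1 (Order.lt_succ_iff.1 h2)

theorem scale {M : ℝ → ℝ} (hM : IsOrlicz M) {s t : ℝ} (hs : 0 ≤ s) (hs1 : s ≤ 1) (ht : 0 ≤ t) :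
    M (s * t) ≤ s * M t := by
  have := hM.convex.2 (x := t) (y := 0) ht (by simp) hs (sub_nonneg.2 hs1) (by ring)
  simpa [hM.zero] using this

theorem nonneg {M : ℝ → ℝ} (hM : IsOrlicz M) {t : ℝ} (ht : 0 ≤ t) : 0 ≤ M t := by
  rcases ht.eq_or_lt with rfl | h
  · rw [hM.zero]
  · exact (hM.pos t h).le

theorem term {M : ℝ → ℝ} (hM : IsOrlicz M) (q : ℕ) {b : ℝ} (hb : 0 ≤ b) :
    M ((1/2)^q) * 2^q * b ≤ M ((1/2)^q) + M b := by
  set t : ℝ := (1/2)^q with ht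
  have h2 : (2:ℝ)^q = t⁻¹ := by rw [ht]; simp
  have ht0 : 0 < t := by positivity
  have hMt := hM.pos t ht0
  rw [h2]
  rcases le_total b t with h | h
  · have : t⁻¹ * b ≤ 1 := by rw [inv_mul_le_iff₀ ht0]; linarith
    have := nonneg hM hb
    nlinarith
  · have hb0 : 0 < b := lt_of_lt_of_le ht0 h
    have h3 := scale hM (s := t / b) (t := b) (by positivity) ((div_le_one hb0).2 h) hb
    rw [div_mul_cancel₀ _ hb0.ne'] at h3
    have h4 : M t * t⁻¹ * b ≤ (t / b * M b) * t⁻¹ * b := by gcongr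
    have h5 : (t / b * M b) * t⁻¹ * b = M b := by field_simp
    linarith

theorem ev_bound {M : ℝ → ℝ} (hM : IsOrlicz M) (l : List (ℕ × ℕ)) (hl : Good M l) (a : ℕ → ℝ)
    (K : ℕ) (hK : ∀ p ∈ l, K ≤ p.1) 
    (hS : ∀ S : Finset ℕ, (∀ k ∈ S, K ≤ k) → ∑ k ∈ S, M |a k| ≤ 1) : |ev M l a| ≤ 2 := by
  have h1 : |ev M l a| ≤ (l.map fun p => M ((1/2)^p.2)).sum + (l.map fun p => M |a p.1|).sum := by
    clear hl hK
    induction l with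
    | nil => simp [ev]
    | cons p l ih =>
      simp only [ev, List.map_cons, List.sum_cons] at ih ⊢
      refine (abs_add_le _ _).trans ?_
      have := term hM p.2 (abs_nonneg (a p.1))
      have hp := hM.pos ((1/2)^p.2) (by positivity)
      rw [abs_mul, abs_of_nonneg (by positivity : 0 ≤ M ((1/2)^p.2) * 2^p.2)]
      linarith
  have hnd : (l.map Prod.fst).Nodup := by
    rw [List.Nodup, List.pairwise_map]
    exact hl.1.imp (fun h => h.ne)
  have h2 : (l.map fun p => M |a p.1|).sum = ∑ k ∈ (l.map Prod.fst).toFinset, M |a k| := by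
    rw [List.sum_toFinset _ hnd, List.map_map]; rfl
  have h3 := hS (l.map Prod.fst).toFinset (by
    intro k hk
    simp only [List.mem_toFinset, List.mem_map] at hk
    obtain ⟨p, hp, rfl⟩ := hk
    exact hK p hp)
  have := hl.2
  linarith

theorem MemHM.tail {M : ℝ → ℝ} (hM : IsOrlicz M) {a : ℕ → ℝ} (ha : MemHM M a) : Tail M a := by
  intro ε hε
  set c : ℝ := 3 / ε with hc
  have hc0 : 0 < c := by positivity
  have hs := ha c
  have := hs.vanishing (Metric.ball_mem_nhds 0 one_pos)
  obtain ⟨s, hs⟩ := this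
  refine ⟨s.sup id + 1, fun l hl hK => ?_⟩
  have := ev_bound hM l hl (c • a) _ hK (fun S hS => ?_)
  · rw [ev_smul, abs_mul, abs_of_pos hc0, hc, div_mul_eq_mul_div, div_le_iff₀ hε] at this
    linarith
  · have := hs S (by
      rw [Finset.disjoint_left]
      intro k hk hks
      have h1 := hS k hk
      have h2 : k ≤ s.sup id := Finset.le_sup (f := id) hks
      omega)
    rw [Metric.mem_ball, dist_zero_right] at this
    have h2 := (le_abs_self _).trans (this.le)
    simpa [abs_mul, abs_of_pos hc0] using h2

theorem geo (S : Finset ℕ) : ∑ k ∈ S, (1/2 : ℝ)^(k+3) ≤ 1/4 := by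
  have h := summable_geometric_two.sum_le_tsum S (fun i _ => by positivity)
  rw [tsum_geometric_two] at h
  have : ∑ k ∈ S, (1/2 : ℝ)^(k+3) = 1/8 * ∑ k ∈ S, (1/2 : ℝ)^k := by
    rw [Finset.mul_sum]; exact Finset.sum_congr rfl (fun k _ => by ring)
  linarith

theorem greedy (f : ℕ → ℝ) (A : Finset ℕ) : (∀ k ∈ A, f k ≤ 1) → 1 ≤ ∑ k ∈ A, f k →
    ∃ F ⊆ A, 1/2 ≤ ∑ k ∈ F, f k ∧ ∑ k ∈ F, f k ≤ 1 := by
  classical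
  induction A using Finset.induction_on with
  | empty => intro _ h; norm_num at h
  | insert k A hk ih =>
    intro hf hs
    rw [Finset.sum_insert hk] at hs
    by_cases h : 1 ≤ ∑ k ∈ A, f k
    · obtain ⟨F, hF, h1⟩ := ih (fun j hj => hf j (by simp [hj])) h
      exact ⟨F, hF.trans (Finset.subset_insert _ _), h1⟩
    · by_cases h2 : 1/2 ≤ ∑ k ∈ A, f k
      · exact ⟨A, Finset.subset_insert _ _, h2, by linarith⟩
      · refine ⟨{k}, by simp, ?_, ?_⟩
        · simp only [Finset.sum_singleton]; linarith
        · simpa using hf k (by simp)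

theorem key {M : ℝ → ℝ} (hM : IsOrlicz M) (Q N : ℕ → ℕ) (B : ℝ) (hB : 8 ≤ B)
    (hQ1 : ∀ k, M ((1/2)^Q k) ≤ (1/2)^(k+3))
    (hQ2 : ∀ i s, 0 < s → s < (1/2)^Q i → 2^(i+4) * M s ≤ M (B * s))
    (hN : ∀ i, 1 / M ((1/2)^Q i) ≤ N i) (b : ℕ → ℝ) (S : Finset ℕ) (hb : ∀ k ∈ S, 0 < b k)
    (hS : 1/2 < ∑ k ∈ S, M (b k)) :
    ∃ i l, Good M l ∧ (∀ p ∈ l, i ≤ p.1 ∧ p.2 ≤ Q i) ∧ l.length ≤ N i ∧ (∀ p ∈ l, p.1 ∈ S) ∧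
      1/(4*B) ≤ ev M l b := by
  classical
  set S' := S.filter (fun k => (1/2)^Q k ≤ b k) with hS'
  have hsplit := Finset.sum_filter_add_sum_filter_not S (fun k => (1/2)^Q k ≤ b k) (fun k => M (b k))
  have hbad : ∑ k ∈ S.filter (fun k => ¬ (1/2)^Q k ≤ b k), M (b k) ≤ 1/4 := by
    refine le_trans (Finset.sum_le_sum (fun k hk => ?_)) (geo _)
    rw [Finset.mem_filter] at hk
    refine le_trans (hM.mono (hb k hk.1).le (by simp) (not_le.1 hk.2).le) (hQ1 k)
  have hgood : 1/4 < ∑ k ∈ S', M (b k) := by linarith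
  let lam : ℕ → ℕ := fun k => if h : ∃ i, (1/2)^Q i ≤ b k then Nat.find h else 0
  have hlam : ∀ k ∈ S', (1/2)^Q (lam k) ≤ b k ∧ lam k ≤ k ∧ ∀ i < lam k, b k < (1/2)^Q i := by
    intro k hk
    have h : ∃ i, (1/2)^Q i ≤ b k := ⟨k, (Finset.mem_filter.1 hk).2⟩
    have e : lam k = Nat.find h := dif_pos h
    rw [e]
    exact ⟨Nat.find_spec h, Nat.find_min' h (Finset.mem_filter.1 hk).2,
      fun i hi => not_le.1 (Nat.find_min h hi)⟩
  obtain ⟨i, hi⟩ : ∃ i, (1/2 : ℝ)^(i+3) < ∑ k ∈ S'.filter (fun k => lam k = i), M (b k) := by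
    by_contra hcon
    push Not at hcon
    have := Finset.sum_fiberwise_of_maps_to (s := S') (t := S'.image lam) (g := lam)
      (fun k hk => Finset.mem_image_of_mem _ hk) (fun k => M (b k))
    have h2 := (Finset.sum_le_sum (s := S'.image lam) (fun i _ => hcon i)).trans (geo _)
    linarith
  set A := S'.filter (fun k => lam k = i) with hA
  have hB0 : 0 < B := by linarith
  have hAp : ∀ k ∈ A, k ∈ S ∧ 0 < b k ∧ i ≤ k ∧ (1/2)^Q i ≤ b k ∧
      2^(i+3) * M (b k) ≤ M (B * b k) := by
    intro k hk
    obtain ⟨hk1, hk2⟩ := Finset.mem_filter.1 hk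
    have hkS := (Finset.mem_filter.1 hk1).1
    obtain ⟨h1, h2, h3⟩ := hlam k hk1
    rw [hk2] at h1 h2 h3
    refine ⟨hkS, hb k hkS, h2, h1, ?_⟩
    rcases i with _ | i
    · have hb0 := hb k hkS
      have h4 := scale hM (s := 1/8) (t := 8 * b k) (by norm_num) (by norm_num) (by positivity)
      rw [show (1/8 : ℝ) * (8 * b k) = b k by ring] at h4
      have h5 : M (8 * b k) ≤ M (B * b k) := hM.mono (by simp; positivity) (by simp; positivity)
        (by gcongr)
      norm_num
      linarith
    · exact hQ2 i (b k) (hb k hkS) (h3 i (Nat.lt_succ_self i))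
  have hAsum : 1 ≤ ∑ k ∈ A, M (B * b k) := by
    have h1 : ∑ k ∈ A, 2^(i+3) * M (b k) ≤ ∑ k ∈ A, M (B * b k) :=
      Finset.sum_le_sum (fun k hk => (hAp k hk).2.2.2.2)
    rw [← Finset.mul_sum] at h1
    have h2 : (2:ℝ)^(i+3) * (1/2)^(i+3) = 1 := by rw [← mul_pow]; norm_num
    have h3 : (2:ℝ)^(i+3) * (1/2)^(i+3) ≤ 2^(i+3) * ∑ k ∈ A, M (b k) := by gcongr
    linarith
  have hq : ∀ k, ∃ q, k ∈ A → q ≤ Q i ∧ (1/2)^q ≤ 2 * B * b k ∧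
      (1 ≤ M ((1/2)^q) ∨ M (B * b k) ≤ M ((1/2)^q)) := by
    intro k
    by_cases hk : k ∈ A
    · obtain ⟨_, hb0, _, hQk, _⟩ := hAp k hk
      rcases le_total 1 (B * b k) with h | h
      · refine ⟨0, fun _ => ⟨Nat.zero_le _, ?_, Or.inl ?_⟩⟩
        · rw [pow_zero]; nlinarith
        · rw [pow_zero, hM.one]
      · obtain ⟨q, h1, h2⟩ := exists_nat_pow_near_of_lt_one (x := B * b k) (y := 1/2)
          (by positivity) h (by norm_num) (by norm_num)
        refine ⟨q, fun _ => ⟨?_, ?_, Or.inr ?_⟩⟩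
        · have h3 : ((1:ℝ)/2)^Q i ≤ (1/2)^q := by nlinarith
          exact (pow_le_pow_iff_right_of_lt_one₀ (by norm_num) (by norm_num)).1 h3
        · rw [pow_succ] at h1; linarith
        · exact hM.mono (by simp; positivity) (by simp) h2
    · exact ⟨0, fun h => absurd h hk⟩
  choose q hq using hq
  set f : ℕ → ℝ := fun k => M ((1/2)^q k) with hf
  have hf0 : ∀ k, 0 < f k := fun k => hM.pos _ (by positivity)
  have hf1 : ∀ k ∈ A, f k ≤ 1 := fun k _ => by
    rw [← hM.one]
    exact hM.mono (by simp) (by simp) (pow_le_one₀ (by norm_num) (by norm_num))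
  have hfs : 1 ≤ ∑ k ∈ A, f k := by
    by_cases h : ∃ k ∈ A, 1 ≤ f k
    · obtain ⟨k, hk, h⟩ := h
      exact h.trans (Finset.single_le_sum (f := f) (fun j _ => (hf0 j).le) hk)
    · push Not at h
      refine hAsum.trans (Finset.sum_le_sum (fun k hk => ?_))
      rcases (hq k hk).2.2 with h1 | h1
      · exact absurd h1 (not_le.2 (h k hk))
      · exact h1
  obtain ⟨F, hFA, hF1, hF2⟩ := greedy f A hf1 hfs
  have hsum : ∀ g : ℕ → ℝ, ((F.sort (· ≤ ·)).map g).sum = ∑ k ∈ F, g k := by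
    intro g
    rw [← List.sum_toFinset g (F.sort_nodup _), Finset.sort_toFinset]
  refine ⟨i, (F.sort (· ≤ ·)).map (fun k => (k, q k)), ⟨?_, ?_⟩, ?_, ?_, ?_, ?_⟩
  · rw [List.pairwise_map]
    exact (Finset.sortedLT_sort F).pairwise
  · rw [List.map_map]
    exact (hsum f).trans_le hF2
  · intro p hp
    simp only [List.mem_map, Finset.mem_sort] at hp
    obtain ⟨k, hk, rfl⟩ := hp
    exact ⟨(hAp k (hFA hk)).2.2.1, (hq k (hFA hk)).1⟩
  · rw [List.length_map, Finset.length_sort]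
    have hmu := hM.pos ((1/2)^Q i) (by positivity)
    have h1 : (F.card : ℝ) * M ((1/2)^Q i) ≤ 1 := by
      refine le_trans ?_ hF2
      rw [← _root_.nsmul_eq_mul]
      refine Finset.card_nsmul_le_sum _ _ _ (fun k hk => ?_)
      exact hM.mono (by simp) (by simp)
        (pow_le_pow_of_le_one (by norm_num) (by norm_num) (hq k (hFA hk)).1)
    have h2 : (F.card : ℝ) ≤ N i := by
      refine le_trans ?_ (hN i)
      rwa [le_div_iff₀ hmu]
    exact_mod_cast h2
  · intro p hp
    simp only [List.mem_map, Finset.mem_sort] at hp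
    obtain ⟨k, hk, rfl⟩ := hp
    exact (hAp k (hFA hk)).1
  · rw [ev, List.map_map]
    refine le_trans ?_ (hsum (fun k => M ((1/2)^q k) * 2^q k * b k)).ge
    have h1 : ∑ k ∈ F, f k / (2*B) ≤ ∑ k ∈ F, M ((1/2)^q k) * 2^q k * b k := by
      refine Finset.sum_le_sum (fun k hk => ?_)
      have h2 := (hq k (hFA hk)).2.1
      have h3 : (2:ℝ)^q k * (1/2)^q k = 1 := by rw [← mul_pow]; norm_num
      have h4 : 1 ≤ 2^q k * (2 * B * b k) := by rw [← h3]; gcongr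
      rw [div_le_iff₀ (by positivity)]
      have := hf0 k
      simp only [hf] at this ⊢
      nlinarith
    rw [← Finset.sum_div] at h1
    refine le_trans ?_ h1
    rw [div_le_div_iff₀ (by positivity) (by positivity)]
    nlinarith

theorem exQ {M : ℝ → ℝ} (hM : IsOrlicz M) {η : ℝ} (hη : 0 < η)
    (hlim : Tendsto (fun t => M (η * t) / M t) (𝓝[>] (0 : ℝ)) (𝓝 0)) :
    ∃ Q : ℕ → ℕ, (∀ k, M ((1/2)^Q k) ≤ (1/2)^(k+3)) ∧
    (∀ i s, 0 < s → s < (1/2)^Q i → 2^(i+4) * M s ≤ M (max 8 (1/η) * s)) := by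
  have : ∀ k : ℕ, ∃ Q : ℕ, M ((1/2)^Q) ≤ (1/2)^(k+3) ∧
      ∀ s, 0 < s → s < (1/2)^Q → 2^(k+4) * M s ≤ M (max 8 (1/η) * s) := by
    intro k
    have h1 : ∀ᶠ t in 𝓝[>] (0 : ℝ), M (η * t) / M t < (1/2)^(k+4) :=
      hlim.eventually (gt_mem_nhds (by positivity))
    obtain ⟨δ, hδ, h2⟩ := (mem_nhdsGT_iff_exists_Ioo_subset).1 h1
    have hδ : 0 < δ := hδ
    obtain ⟨n, hn⟩ := exists_pow_lt_of_lt_one (show 0 < η * δ by positivity)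
      (show (1/2 : ℝ) < 1 by norm_num)
    refine ⟨max n (k+3), ?_, ?_⟩
    · have := scale hM (s := (1/2)^(max n (k+3))) (t := 1) (by positivity)
        (pow_le_one₀ (by norm_num) (by norm_num)) zero_le_one
      rw [mul_one, hM.one, mul_one] at this
      exact this.trans (pow_le_pow_of_le_one (by norm_num) (by norm_num) (le_max_right _ _))
    · intro s hs hsQ
      have h3 : s < η * δ := hsQ.trans_le ((pow_le_pow_of_le_one (by norm_num) (by norm_num)
        (le_max_left _ _)).trans hn.le)
      have h4 : M (η * (s/η)) / M (s/η) < (1/2)^(k+4) :=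
        h2 ⟨by positivity, by rw [div_lt_iff₀ hη]; linarith⟩
      rw [mul_div_cancel₀ _ hη.ne', div_lt_iff₀ (hM.pos _ (by positivity))] at h4
      have h5 : M (s/η) ≤ M (max 8 (1/η) * s) := by
        refine hM.mono (by simp; positivity) (by simp; positivity) ?_
        rw [div_eq_mul_one_div, mul_comm]
        gcongr
        exact le_max_right _ _
      have h6 : (2:ℝ)^(k+4) * (1/2)^(k+4) = 1 := by rw [← mul_pow]; norm_num
      calc 2^(k+4) * M s ≤ 2^(k+4) * ((1/2)^(k+4) * M (s/η)) := by gcongr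
        _ = M (s/η) := by rw [← mul_assoc, h6, one_mul]
        _ ≤ _ := h5
  choose Q h1 h2 using this
  exact ⟨Q, h1, h2⟩

theorem ev_congr (M : ℝ → ℝ) (l : List (ℕ × ℕ)) (a b : ℕ → ℝ) (h : ∀ p ∈ l, a p.1 = b p.1) :
    ev M l a = ev M l b := by
  unfold ev
  rw [List.map_congr_left (fun p hp => by rw [h p hp])]

theorem key2 {M : ℝ → ℝ} (hM : IsOrlicz M) (Q N : ℕ → ℕ) (B : ℝ) (hB : 8 ≤ B)
    (hQ1 : ∀ k, M ((1/2)^Q k) ≤ (1/2)^(k+3))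
    (hQ2 : ∀ i s, 0 < s → s < (1/2)^Q i → 2^(i+4) * M s ≤ M (B * s))
    (hN : ∀ i, 1 / M ((1/2)^Q i) ≤ N i) (b : ℕ → ℝ) (S : Finset ℕ)
    (hS : 1 < ∑ k ∈ S, M |b k|) :
    ∃ i l, Good M l ∧ (∀ p ∈ l, i ≤ p.1 ∧ p.2 ≤ Q i) ∧ l.length ≤ N i ∧
      1/(4*B) ≤ |ev M l b| := by
  classical
  have h1 := Finset.sum_filter_add_sum_filter_not S (fun k => 0 < b k) (fun k => M |b k|)
  have h2 : ∑ k ∈ S.filter (fun k => ¬ 0 < b k), M |b k| =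
      ∑ k ∈ S.filter (fun k => b k < 0), M |b k| := by
    symm
    apply Finset.sum_subset
    · intro k hk
      simp only [Finset.mem_filter] at hk ⊢
      exact ⟨hk.1, not_lt.2 hk.2.le⟩
    · intro k hk hk'
      simp only [Finset.mem_filter] at hk hk'
      have : b k = 0 := le_antisymm (not_lt.1 hk.2) (not_lt.1 (fun h => hk' ⟨hk.1, h⟩))
      simp [this, hM.zero]
  by_cases h : 1/2 < ∑ k ∈ S.filter (fun k => 0 < b k), M |b k|
  · obtain ⟨i, l, g1, g2, g3, g4, g5⟩ := key hM Q N B hB hQ1 hQ2 hN (fun k => |b k|) _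
      (fun k hk => abs_pos_of_pos (Finset.mem_filter.1 hk).2) h
    refine ⟨i, l, g1, g2, g3, g5.trans ((le_of_eq ?_).trans (le_abs_self _))⟩
    exact ev_congr _ _ _ _ (fun p hp => abs_of_pos (Finset.mem_filter.1 (g4 p hp)).2)
  · obtain ⟨i, l, g1, g2, g3, g4, g5⟩ := key hM Q N B hB hQ1 hQ2 hN (fun k => |b k|)
      (S.filter (fun k => b k < 0))
      (fun k hk => abs_pos_of_neg (Finset.mem_filter.1 hk).2) (by linarith)
    refine ⟨i, l, g1, g2, g3, g5.trans ((le_of_eq ?_).trans (neg_le_abs _))⟩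
    have e : ev M l (fun k => |b k|) = ev M l ((-1 : ℝ) • b) :=
      ev_congr _ _ _ _ (fun p hp => by
        simp [abs_of_neg (Finset.mem_filter.1 (g4 p hp)).2])
    rw [e, ev_smul]; ring

end OE

/-- Let `M` be a nondegenerate Orlicz function such that `lim_{t→0} M(ηt)/M(t) = 0` for
some `η > 0`.  Then the Orlicz sequence space `h_M` is isomorphic to a (closed)
subspace of `C(ω^ω)`. -/
theorem orlicz_embeds_in_C_omega_omega (M : ℝ → ℝ) (hM : IsOrlicz M)
    (η : ℝ) (hη : 0 < η)
    (hlim : Tendsto (fun t => M (η * t) / M t) (𝓝[>] (0 : ℝ)) (𝓝 0)) :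
    EmbedsHM M (Ordinal.omega0 ^ Ordinal.omega0) := by
  classical
  obtain ⟨Q, hQ1, hQ2⟩ := OE.exQ hM hη hlim
  set B : ℝ := max 8 (1/η) with hBdef
  have hB : 8 ≤ B := le_max_left _ _
  have hB0 : 0 < B := by linarith
  let N : ℕ → ℕ := fun i => ⌈1 / M ((1/2)^Q i)⌉₊ + i
  have hN : ∀ i, 1 / M ((1/2)^Q i) ≤ N i := fun i => by
    simp only [N, Nat.cast_add]
    have := Nat.le_ceil (1 / M ((1/2)^Q i))
    have h2 : (0:ℝ) ≤ i := Nat.cast_nonneg i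
    linarith
  obtain ⟨Φ, h1, h2, h3⟩ := OE.top M hM Q N (fun i => Nat.le_add_left _ _)
  have : CompactSpace ↥(Set.Iic (Ordinal.omega0 ^ Ordinal.omega0 : Ordinal.{1})) := by
    rw [← isCompact_iff_compactSpace, ← Set.Icc_bot]
    exact isCompact_Icc
  let T : (ℕ → ℝ) → COrd (Ordinal.omega0 ^ Ordinal.omega0) := fun a =>
    if h : OE.Tail M a then
      BoundedContinuousFunction.mkOfCompact ⟨fun x => OE.ev M (Φ x) a, (h3 a h).continuous⟩
    else 0
  have hT : ∀ a, OE.Tail M a → ∀ x, T a x = OE.ev M (Φ x) a := by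
    intro a ha x
    simp only [T, dif_pos ha]
    rfl
  refine ⟨T, ?_, ?_, 1/(4*B), by positivity, 2, by norm_num, ?_⟩
  · intro a b ha hb
    have ha := OE.MemHM.tail hM ha
    have hb := OE.MemHM.tail hM hb
    ext x
    rw [hT _ (ha.add hb), BoundedContinuousFunction.add_apply, hT _ ha, hT _ hb, OE.ev_add]
  · intro c a ha
    have ha := OE.MemHM.tail hM ha
    ext x
    rw [hT _ (ha.smul c), BoundedContinuousFunction.smul_apply, hT _ ha, OE.ev_smul]
    rfl
  · intro a ha
    have hat := OE.MemHM.tail hM ha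
    have hsum : ∀ ρ : ℝ, Summable fun k => M (|a k| / ρ) := fun ρ => by
      simpa [div_eq_inv_mul] using ha ρ⁻¹
    have hnn : ∀ ρ : ℝ, 0 < ρ → ∀ k, 0 ≤ M (|a k| / ρ) := fun ρ hρ k =>
      OE.nonneg hM (by positivity)
    have hbdd : BddBelow {ρ : ℝ | 0 < ρ ∧ (∑' k, M (|a k| / ρ)) ≤ 1} := ⟨0, fun ρ h => h.1.le⟩
    constructor
    · have key : ∀ ρ, 4 * B * ‖T a‖ < ρ → orliczNorm M a ≤ ρ := by
        intro ρ hρ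
        have hρ0 : 0 < ρ := lt_of_le_of_lt (by positivity) hρ
        refine csInf_le hbdd ⟨hρ0, ?_⟩
        by_contra hcon
        push Not at hcon
        obtain ⟨S, hS⟩ := ((hsum ρ).hasSum.eventually (lt_mem_nhds hcon)).exists
        obtain ⟨i, l, g1, g2, g3, g4⟩ := OE.key2 hM Q N B hB hQ1 hQ2 hN (ρ⁻¹ • a) S (by
          refine hS.trans_eq (Finset.sum_congr rfl fun k _ => ?_)
          simp [abs_mul, abs_of_pos hρ0, div_eq_inv_mul])
        obtain ⟨x, hx, hxl⟩ := h2 i l g1 g2 g3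
        have h5 := (T a).norm_coe_le_norm ⟨x, hx⟩
        rw [hT a hat, hxl, Real.norm_eq_abs] at h5
        rw [OE.ev_smul, abs_mul, abs_of_pos (inv_pos.2 hρ0), div_le_iff₀ (by positivity)] at g4
        have : ρ⁻¹ * |OE.ev M l a| * (4 * B) ≤ ρ⁻¹ * (4 * B * ‖T a‖) := by
          have : |OE.ev M l a| * (4 * B) ≤ 4 * B * ‖T a‖ := by nlinarith
          rw [mul_assoc]; gcongr
        have h6 : ρ⁻¹ * (4 * B * ‖T a‖) < ρ⁻¹ * ρ := by gcongr
        rw [inv_mul_cancel₀ hρ0.ne'] at h6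
        linarith
      have := le_of_forall_gt_imp_ge_of_dense key
      rw [div_mul_eq_mul_div, div_le_iff₀ (by positivity)]
      linarith
    · have key : ∀ ρ ∈ {ρ : ℝ | 0 < ρ ∧ (∑' k, M (|a k| / ρ)) ≤ 1}, ‖T a‖ / 2 ≤ ρ := by
        rintro ρ ⟨hρ, hs⟩
        rw [div_le_iff₀ two_pos, BoundedContinuousFunction.norm_le (by positivity)]
        intro x
        rw [hT a hat, Real.norm_eq_abs]
        have := OE.ev_bound hM (Φ x) (h1 x) (ρ⁻¹ • a) 0 (fun _ _ => Nat.zero_le _) (fun S _ => by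
          refine le_trans (le_of_eq ?_) (((hsum ρ).sum_le_tsum S (fun k _ => hnn ρ hρ k)).trans hs)
          refine Finset.sum_congr rfl fun k _ => ?_
          simp [abs_mul, abs_of_pos hρ, div_eq_inv_mul])
        rw [OE.ev_smul, abs_mul, abs_of_pos (inv_pos.2 hρ), inv_mul_le_iff₀ hρ] at this
        exact this
      have hne : {ρ : ℝ | 0 < ρ ∧ (∑' k, M (|a k| / ρ)) ≤ 1}.Nonempty := by
        have h0 : 0 ≤ ∑' k, M (|a k| / 1) := tsum_nonneg (hnn 1 one_pos)
        set s := ∑' k, M (|a k| / 1) with hs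
        refine ⟨1 + s, by positivity, ?_⟩
        have h4 : ∑' k, M (|a k| / (1+s)) ≤ ∑' k, (1+s)⁻¹ * M (|a k| / 1) := by
          refine (hsum _).tsum_le_tsum (fun k => ?_) ((hsum 1).mul_left _)
          rw [_root_.div_one, div_eq_inv_mul]
          exact OE.scale hM (by positivity) (inv_le_one_of_one_le₀ (by linarith)) (abs_nonneg _)
        rw [tsum_mul_left, ← hs] at h4
        refine h4.trans ?_
        rw [inv_mul_le_iff₀ (by positivity)]
        linarith
      have := le_csInf hne key
      unfold orliczNorm
      linarith
end

section
/- A Banach space E is isomorphic to a subspace of C(K) for a compact Hausdorff topological space K if and only if the dual space E' contains a norming subset W which, when endowed with the weak* topology, is a continuous image of K. -/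
open Filter Topology

/-- A Banach space `E` is isomorphic to a subspace of `C(K)`, `K` compact Hausdorff
(equivalently, of the space of bounded continuous functions on `K`), if and only if the
dual `E'` contains a norming subset `W` which, in the weak* topology, is a continuous
image of `K` — i.e. there is a map `φ : K → E'`, continuous into the weak* topology,
whose range is norming. -/
theorem embeds_in_CK_iff_norming_weakStar_image
    (E : Type*) [NormedAddCommGroup E] [NormedSpace ℝ E] [CompleteSpace E]
    (K : Type*) [TopologicalSpace K] [CompactSpace K] [T2Space K] :
    (∃ T : E →L[ℝ] BoundedContinuousFunction K ℝ,
        ∃ c > (0 : ℝ), ∀ x : E, c * ‖x‖ ≤ ‖T x‖) ↔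
    (∃ φ : K → (E →L[ℝ] ℝ), (∀ x : E, Continuous fun k => φ k x) ∧
        ∃ C > (0 : ℝ), ∀ x : E,
          C⁻¹ * (⨆ k, |φ k x|) ≤ ‖x‖ ∧ ‖x‖ ≤ C * ⨆ k, |φ k x|) := by
  constructor
  · rintro ⟨T, c, hc, h⟩
    have hs : ∀ x, (⨆ k, |T x k|) = ‖T x‖ := fun x => by
      rw [BoundedContinuousFunction.norm_eq_iSup_norm]; rfl
    refine ⟨fun k => (BoundedContinuousFunction.evalCLM ℝ k).comp T,
      fun x => (T x).continuous, ‖T‖ + c⁻¹, by positivity, fun x => ?_⟩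
    have hC : 0 < ‖T‖ + c⁻¹ := by positivity
    change (‖T‖ + c⁻¹)⁻¹ * (⨆ k, |T x k|) ≤ ‖x‖ ∧ ‖x‖ ≤ (‖T‖ + c⁻¹) * ⨆ k, |T x k|
    rw [hs x]
    constructor
    · rw [inv_mul_le_iff₀ hC]
      refine (T.le_opNorm x).trans ?_
      gcongr
      have : 0 < c⁻¹ := by positivity
      linarith
    · have h1 : ‖x‖ ≤ c⁻¹ * ‖T x‖ := by
        rw [le_inv_mul_iff₀ hc]; exact h x
      have h2 : 0 ≤ ‖T‖ * ‖T x‖ := by positivity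
      linarith
  · rintro ⟨φ, hφ, C, hC, h⟩
    let L : E →ₗ[ℝ] BoundedContinuousFunction K ℝ :=
      { toFun := fun x => BoundedContinuousFunction.mkOfCompact ⟨fun k => φ k x, hφ x⟩
        map_add' := fun x y => by ext k; simp
        map_smul' := fun a x => by ext k; simp }
    have hL : ∀ x, ‖L x‖ = ⨆ k, |φ k x| := fun x => by
      rw [BoundedContinuousFunction.norm_eq_iSup_norm]; rfl
    refine ⟨L.mkContinuous C fun x => ?_, C⁻¹, by positivity, fun x => ?_⟩
    · rw [hL, ← inv_mul_le_iff₀ hC]; exact (h x).1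
    · rw [LinearMap.mkContinuous_apply, hL, inv_mul_le_iff₀ hC]; exact (h x).2
end

section
/- Let M be a nondegenerate Orlicz function. Suppose there exist a compact, hereditary subset K of P_<∞(ℕ) and a constant η > 0 such that η‖a‖_M ≤ sup{ ‖a χ_A‖_M : A ∈ K } for every a ∈ h_M, where a χ_A denotes the sequence equal to a on A and 0 elsewhere. Then lim_{t→0} M(ηt/2)/M(t) = 0. -/
open Ordinal Filter Topology

/-- Small weights for all members of `K` containing some `s ∈ T`. -/
def GoodT (K : Set (ℕ → Bool)) (W : Set ℝ) (T : Finset (Finset ℕ)) : Prop :=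
  ∀ ε c : ℝ, 0 < ε → 0 < c → ∀ N : ℕ, (∀ s ∈ T, ∀ j ∈ s, j < N) →
    ∃ (N' : ℕ) (ν : ℕ → ℝ), N ≤ N' ∧ (∀ k, ν k ∈ W) ∧
      c ≤ ∑ k ∈ Finset.Ico N N', ν k ∧ ∑ k ∈ Finset.Ico N N', ν k ≤ 2 * c ∧
      ∀ s ∈ T, ∀ A ∈ K, (∀ j ∈ s, A j = true) →
        ∑ k ∈ Finset.Ico N N', (if A k = true then ν k else 0) ≤ ε

lemma goodT_empty (K : Set (ℕ → Bool)) (W : Set ℝ) (hWpos : ∀ w ∈ W, 0 < w)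
    (hWs : ∀ e : ℝ, 0 < e → ∃ w ∈ W, w < e) : GoodT K W ∅ := by
  intro ε c _ hc N _
  obtain ⟨w, hw, hwc⟩ := hWs c hc
  have hw0 := hWpos w hw
  refine ⟨N + ⌈c / w⌉₊, fun _ => w, by omega, fun _ => hw, ?_, ?_, by simp⟩
  · have := Nat.le_ceil (c / w)
    rw [div_le_iff₀ hw0] at this
    simpa using this
  · have := (Nat.ceil_lt_add_one (div_pos hc hw0).le).le
    have h2 : (⌈c / w⌉₊ : ℝ) * w ≤ (c / w + 1) * w := by gcongr
    have h3 : (c / w + 1) * w = c + w := by field_simp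
    simp
    linarith

lemma goodT_step (K : Set (ℕ → Bool)) (W : Set ℝ) (hWpos : ∀ w ∈ W, 0 < w)
    (T : Finset (Finset ℕ))
    (h0 : GoodT K W ∅)
    (h : ∀ T' : Finset (Finset ℕ), (∀ t ∈ T', ∃ s ∈ T, s ⊂ t ∧ ∃ A ∈ K, ∀ j ∈ t, A j = true) →
      GoodT K W T') : GoodT K W T := by
  classical
  have key : ∀ ε c : ℝ, 0 < ε → 0 < c → ∀ N : ℕ, (∀ s ∈ T, ∀ j ∈ s, j < N) → ∀ m : ℕ,
    ∃ (N' : ℕ) (ν : ℕ → ℝ), N ≤ N' ∧ (∀ k, ν k ∈ W) ∧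
      (m + 1) * c ≤ ∑ k ∈ Finset.Ico N N', ν k ∧
      ∑ k ∈ Finset.Ico N N', ν k ≤ (m + 1) * (2 * c) ∧
      ∀ s ∈ T, ∀ A ∈ K, (∀ j ∈ s, A j = true) →
        ∑ k ∈ Finset.Ico N N', (if A k = true then ν k else 0) ≤ 2 * c + m * ε := by
    intro ε c hε hc N hN m
    induction m with
    | zero =>
      obtain ⟨N', ν, h1, h2, h3, h4, -⟩ := h0 ε c hε hc N (by simp)
      refine ⟨N', ν, h1, h2, by simpa using h3, by simpa using h4, ?_⟩
      intro s _ A _ _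
      have : ∑ k ∈ Finset.Ico N N', (if A k = true then ν k else 0)
          ≤ ∑ k ∈ Finset.Ico N N', ν k := by
        refine Finset.sum_le_sum fun k _ => ?_
        have := hWpos _ (h2 k)
        split_ifs <;> linarith
      push_cast
      linarith
    | succ m ih =>
      obtain ⟨N1, ν, h1, h2, h3, h4, h5⟩ := ih
      let T' : Finset (Finset ℕ) :=
        ((T ×ˢ Finset.Ico N N1).image (fun p => insert p.2 p.1)).filter
          (fun t => ∃ A ∈ K, ∀ j ∈ t, A j = true)
      have hT' : ∀ t, t ∈ T' ↔ (∃ s ∈ T, ∃ j, (N ≤ j ∧ j < N1) ∧ insert j s = t) ∧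
          ∃ A ∈ K, ∀ j ∈ t, A j = true := by
        intro t
        simp only [T', Finset.mem_filter, Finset.mem_image, Finset.mem_product, Finset.mem_Ico,
          Prod.exists]
        constructor
        · rintro ⟨⟨s, j, ⟨a, b⟩, e⟩, f⟩
          exact ⟨⟨s, a, j, b, e⟩, f⟩
        · rintro ⟨⟨s, a, j, b, e⟩, f⟩
          exact ⟨⟨s, j, ⟨a, b⟩, e⟩, f⟩
      have hg : GoodT K W T' := by
        apply h
        intro t ht
        obtain ⟨⟨s, hs, j, hj, rfl⟩, hA⟩ := (hT' t).1 ht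
        refine ⟨s, hs, Finset.ssubset_insert ?_, hA⟩
        intro hjs
        have := hN s hs j hjs
        omega
      obtain ⟨N2, μ, g1, g2, g3, g4, g5⟩ := hg ε c hε hc N1 (by
        intro t ht i hi
        obtain ⟨⟨s, hs, j, hj, rfl⟩, hA⟩ := (hT' t).1 ht
        rcases Finset.mem_insert.1 hi with rfl | hi
        · exact hj.2
        · have := hN s hs i hi
          omega)
      have e1 : ∀ k ∈ Finset.Ico N N1, (if k < N1 then ν k else μ k) = ν k := by
        intro k hk
        rw [if_pos (Finset.mem_Ico.1 hk).2]
      have e2 : ∀ k ∈ Finset.Ico N1 N2, (if k < N1 then ν k else μ k) = μ k := by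
        intro k hk
        rw [if_neg (not_lt.2 (Finset.mem_Ico.1 hk).1)]
      refine ⟨N2, fun k => if k < N1 then ν k else μ k, h1.trans g1, ?_, ?_, ?_, ?_⟩
      · intro k
        dsimp only
        split_ifs
        · exact h2 k
        · exact g2 k
      · rw [← Finset.sum_Ico_consecutive _ h1 g1, Finset.sum_congr rfl e1,
          Finset.sum_congr rfl e2]
        push_cast
        linarith
      · rw [← Finset.sum_Ico_consecutive _ h1 g1, Finset.sum_congr rfl e1,
          Finset.sum_congr rfl e2]
        push_cast
        linarith
      · intro s hs A hA hsA
        have e1' : ∀ k ∈ Finset.Ico N N1, (if A k = true then (if k < N1 then ν k else μ k) else 0)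
            = if A k = true then ν k else 0 := fun k hk => by rw [e1 k hk]
        have e2' : ∀ k ∈ Finset.Ico N1 N2, (if A k = true then (if k < N1 then ν k else μ k) else 0)
            = if A k = true then μ k else 0 := fun k hk => by rw [e2 k hk]
        rw [← Finset.sum_Ico_consecutive _ h1 g1, Finset.sum_congr rfl e1',
          Finset.sum_congr rfl e2']
        push_cast
        by_cases hex : ∃ j, (N ≤ j ∧ j < N1) ∧ A j = true
        · obtain ⟨j, hj, hAj⟩ := hex
          have hAt : ∀ i ∈ insert j s, A i = true := by
            intro i hi
            rcases Finset.mem_insert.1 hi with rfl | hi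
            · exact hAj
            · exact hsA i hi
          have b1 := g5 (insert j s) ((hT' _).2 ⟨⟨s, hs, j, hj, rfl⟩, A, hA, hAt⟩) A hA hAt
          have b2 := h5 s hs A hA hsA
          linarith
        · have z : ∑ k ∈ Finset.Ico N N1, (if A k = true then ν k else 0) = 0 := by
            refine Finset.sum_eq_zero fun k hk => ?_
            rw [if_neg]
            intro hk2
            exact hex ⟨k, Finset.mem_Ico.1 hk, hk2⟩
          have : ∑ k ∈ Finset.Ico N1 N2, (if A k = true then μ k else 0)
              ≤ ∑ k ∈ Finset.Ico N1 N2, μ k := by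
            refine Finset.sum_le_sum fun k _ => ?_
            have := hWpos _ (g2 k)
            split_ifs <;> linarith
          have : 0 ≤ ((m : ℝ) + 1) * ε := by positivity
          linarith
  intro ε c hε hc N hN
  obtain ⟨m, hm⟩ := exists_nat_gt (4 * c / ε)
  have hm1 : (0 : ℝ) < m + 1 := by positivity
  obtain ⟨N', ν, h1, h2, h3, h4, h5⟩ := key (ε / (2 * (m + 1))) (c / (m + 1)) (by positivity)
    (by positivity) N hN m
  refine ⟨N', ν, h1, h2, ?_, ?_, ?_⟩
  · have : ((m : ℝ) + 1) * (c / (m + 1)) = c := by field_simp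
    linarith
  · have : ((m : ℝ) + 1) * (2 * (c / (m + 1))) = 2 * c := by field_simp
    linarith
  · intro s hs A hA hsA
    refine (h5 s hs A hA hsA).trans ?_
    have a1 : 2 * (c / (m + 1)) ≤ ε / 2 := by
      rw [div_lt_iff₀ hε] at hm
      rw [← mul_div_assoc, div_le_iff₀ hm1]
      nlinarith
    have a2 : (m : ℝ) * (ε / (2 * (m + 1))) ≤ ε / 2 := by
      have : ((m : ℝ) + 1) * (ε / (2 * (m + 1))) = ε / 2 := by field_simp
      have : 0 < ε / (2 * (m + 1)) := by positivity
      nlinarith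
    linarith

lemma wf_K (K : Set (ℕ → Bool))
    (hKfin : ∀ x ∈ K, (toSet x).Finite)
    (hKcpt : IsCompact K)
    (hKher : ∀ x y : ℕ → Bool, (∀ n, x n = true → y n = true) → y ∈ K → x ∈ K) :
    WellFounded (fun t s : Finset ℕ => s ⊂ t ∧ ∃ A ∈ K, ∀ j ∈ t, A j = true) := by
  classical
  rw [wellFounded_iff_isEmpty_descending_chain]
  refine ⟨fun ⟨f, hf⟩ => ?_⟩
  have hmono : StrictMono f := strictMono_nat_of_lt_succ fun n => (hf n).1
  have hx : ∀ n, (fun k => decide (k ∈ f (n+1))) ∈ K := by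
    intro n
    obtain ⟨-, A, hA, hA2⟩ := hf n
    exact hKher _ A (fun k hk => hA2 k (by simpa using hk)) hA
  let y : ℕ → Bool := fun k => decide (∃ n, k ∈ f n)
  have hlim : Tendsto (fun n => (fun k => decide (k ∈ f (n+1)))) atTop (𝓝 y) := by
    rw [tendsto_pi_nhds]
    intro k
    refine tendsto_const_nhds.congr' ?_
    by_cases hk : ∃ n, k ∈ f n
    · obtain ⟨n, hn⟩ := hk
      filter_upwards [eventually_ge_atTop n] with m hm
      have : k ∈ f (m+1) := hmono.monotone (by omega : n ≤ m + 1) hn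
      simp only [y, this, decide_true, decide_eq_true_eq]
      exact ⟨n, hn⟩
    · filter_upwards with m
      have : k ∉ f (m+1) := fun h => hk ⟨_, h⟩
      simp [y, this, hk]
  have hy : y ∈ K := hKcpt.isClosed.mem_of_tendsto hlim (Eventually.of_forall hx)
  have hfin := hKfin y hy
  have hsub : ∀ n, f n ⊆ hfin.toFinset := by
    intro n k hk
    simp only [Set.Finite.mem_toFinset, toSet, Set.mem_ofPred_eq, y, decide_eq_true_eq]
    exact ⟨n, hk⟩
  have hcard : ∀ n, n ≤ (f n).card := by
    have : StrictMono (fun n => (f n).card) := fun a b hab => Finset.card_lt_card (hmono hab)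
    exact this.id_le
  have := Finset.card_le_card (hsub (hfin.toFinset.card + 1))
  have := hcard (hfin.toFinset.card + 1)
  omega

lemma goodT_all (K : Set (ℕ → Bool))
    (hKfin : ∀ x ∈ K, (toSet x).Finite)
    (hKcpt : IsCompact K)
    (hKher : ∀ x y : ℕ → Bool, (∀ n, x n = true → y n = true) → y ∈ K → x ∈ K)
    (W : Set ℝ) (hWpos : ∀ w ∈ W, 0 < w)
    (hWs : ∀ e : ℝ, 0 < e → ∃ w ∈ W, w < e) (T : Finset (Finset ℕ)) : GoodT K W T := by
  classical
  have wf := wf_K K hKfin hKcpt hKher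
  have h0 := goodT_empty K W hWpos hWs
  let rk : Finset ℕ → Ordinal.{0} := fun s => (wf.apply s).rank
  have main : ∀ α : Ordinal.{0}, ∀ T : Finset (Finset ℕ), (∀ s ∈ T, rk s < α) →
      GoodT K W T := by
    intro α
    induction α using WellFoundedLT.induction with
    | ind α ih =>
      intro T hT
      rcases T.eq_empty_or_nonempty with rfl | hne
      · exact h0
      obtain ⟨s0, hs0, hmax⟩ := Finset.exists_max_image T (fun s => rk s) hne
      refine goodT_step K W hWpos T h0 fun T' hT' => ih (rk s0) (hT s0 hs0) T' ?_
      intro t ht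
      obtain ⟨s, hs, hst⟩ := hT' t ht
      exact (Acc.rank_lt_of_rel (wf.apply s) hst).trans_le (hmax s hs)
  rcases T.eq_empty_or_nonempty with rfl | hne
  · exact h0
  obtain ⟨s0, hs0, hmax⟩ := Finset.exists_max_image T (fun s => rk s) hne
  exact main (Order.succ (rk s0)) T fun s hs => Order.lt_succ_of_le (hmax s hs)

lemma IsOrlicz.le_self {M : ℝ → ℝ} (hM : IsOrlicz M) {x : ℝ} (h0 : 0 ≤ x) (h1 : x ≤ 1) :
    M x ≤ x := by
  have := hM.convex.2 (Set.mem_Ici.2 le_rfl) (Set.mem_Ici.2 (zero_le_one (α := ℝ)))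
    (show (0 : ℝ) ≤ 1 - x by linarith) h0 (by ring)
  simpa [hM.zero, hM.one] using this

/-- Let `M` be a nondegenerate Orlicz function.  Suppose there are a compact hereditary
family `K ⊆ P_<∞(ℕ)` (coded in the Cantor space `2^ℕ`) and `η > 0` with
`η ‖a‖_M ≤ sup { ‖a χ_A‖_M : A ∈ K }` for every `a ∈ h_M`.  Then
`lim_{t→0} M(ηt/2)/M(t) = 0`. -/
theorem orlicz_limit_of_norming (M : ℝ → ℝ) (hM : IsOrlicz M)
    (K : Set (ℕ → Bool))
    (hKfin : ∀ x ∈ K, (toSet x).Finite)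
    (hKcpt : IsCompact K)
    (hKher : ∀ x y : ℕ → Bool, (∀ n, x n = true → y n = true) → y ∈ K → x ∈ K)
    (η : ℝ) (hη : 0 < η)
    (hnorming : ∀ a : ℕ → ℝ, MemHM M a →
      η * orliczNorm M a ≤ ⨆ A : K, orliczNorm M (Set.indicator (toSet A.1) a)) :
    Filter.Tendsto (fun t => M (η * t / 2) / M t) (𝓝[>] (0 : ℝ)) (𝓝 0) := by
  classical
  by_contra hcon
  -- frequently large
  have hfreq : ∃ δ : ℝ, 0 < δ ∧ ∀ r : ℝ, 0 < r → ∃ t, 0 < t ∧ t < r ∧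
      δ * M t ≤ M (η * t / 2) := by
    by_contra hno
    push Not at hno
    apply hcon
    rw [Metric.tendsto_nhdsWithin_nhds]
    intro δ hδ
    obtain ⟨r, hr, hr2⟩ := hno δ hδ
    refine ⟨r, hr, fun {t} ht htr => ?_⟩
    have ht0 : 0 < t := ht
    rw [Real.dist_eq, _root_.sub_zero, abs_of_pos ht0] at htr
    have h1 := hr2 t ht0 htr
    have hp := hM.pos t ht0
    have hp2 := hM.pos (η * t / 2) (by positivity)
    rw [Real.dist_eq, _root_.sub_zero, abs_of_pos (div_pos hp2 hp), div_lt_iff₀ hp]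
    exact h1
  obtain ⟨δ, hδ, hsmall⟩ := hfreq
  let W : Set ℝ := {w | ∃ t, 0 < t ∧ δ * M t ≤ M (η * t / 2) ∧ w = M (η * t / 2)}
  have hWpos : ∀ w ∈ W, 0 < w := by
    rintro w ⟨t, ht, -, rfl⟩
    exact hM.pos _ (by positivity)
  have hWs : ∀ e : ℝ, 0 < e → ∃ w ∈ W, w < e := by
    intro e he
    obtain ⟨t, ht, htr, hle⟩ := hsmall (2 * min e 1 / η) (by positivity)
    refine ⟨_, ⟨t, ht, hle, rfl⟩, ?_⟩
    rw [lt_div_iff₀ hη] at htr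
    have h1 : η * t / 2 < min e 1 := by linarith
    have h2 := hM.le_self (x := η * t / 2) (by positivity) (h1.le.trans (min_le_right _ _))
    exact h2.trans_lt (h1.trans_le (min_le_left _ _))
  obtain ⟨N, ν, -, hν, hν1, -, hνA⟩ := goodT_all K hKfin hKcpt hKher W hWpos hWs {∅} δ 2 hδ
    (by norm_num) 0 (by simp)
  choose τ hτ0 hτ1 hτ2 using hν
  let a : ℕ → ℝ := fun k => if k < N then τ k else 0
  have ha0 : ∀ k, 0 ≤ a k := by
    intro k
    simp only [a]
    split_ifs
    · exact (hτ0 k).le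
    · exact le_rfl
  have hazero : ∀ k, k ∉ Finset.range N → a k = 0 := by
    intro k hk
    simp only [a]
    rw [if_neg (by simpa using hk)]
  have haeq : ∀ k ∈ Finset.range N, a k = τ k := by
    intro k hk
    simp only [a]
    rw [if_pos (by simpa using hk)]
  have hmem : MemHM M a := by
    intro c
    refine summable_of_ne_finset_zero (s := Finset.range N) fun k hk => ?_
    simp [hazero k hk, hM.zero]
  have htsum : ∀ ρ, ∑' k, M (|a k| / ρ) = ∑ k ∈ Finset.range N, M (|a k| / ρ) := by
    intro ρ
    refine tsum_eq_sum fun k hk => ?_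
    simp [hazero k hk, hM.zero]
  have hnorm : 2 / η ≤ orliczNorm M a := by
    refine le_csInf ?_ ?_
    · have hS : 0 ≤ ∑ k ∈ Finset.range N, a k := Finset.sum_nonneg fun k _ => ha0 k
      set S := ∑ k ∈ Finset.range N, a k with hSdef
      have hS1 : 0 < 1 + S := by linarith
      refine ⟨1 + S, hS1, ?_⟩
      rw [htsum]
      calc ∑ k ∈ Finset.range N, M (|a k| / (1 + S))
          ≤ ∑ k ∈ Finset.range N, a k / (1 + S) := by
            refine Finset.sum_le_sum fun k hk => ?_
            rw [abs_of_nonneg (ha0 k)]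
            refine hM.le_self (div_nonneg (ha0 k) hS1.le) ?_
            rw [div_le_one hS1]
            have := Finset.single_le_sum (f := a) (fun i _ => ha0 i) hk
            linarith
        _ = S / (1 + S) := by rw [← Finset.sum_div]
        _ ≤ 1 := by rw [div_le_one hS1]; linarith
    · rintro ρ ⟨hρ, hρ1⟩
      by_contra hlt
      push Not at hlt
      rw [htsum] at hρ1
      have : ∑ k ∈ Finset.range N, ν k ≤ ∑ k ∈ Finset.range N, M (|a k| / ρ) := by
        refine Finset.sum_le_sum fun k hk => ?_
        rw [hτ2 k, abs_of_nonneg (ha0 k), haeq k hk]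
        have ht := hτ0 k
        refine hM.mono (Set.mem_Ici.2 (by positivity)) (Set.mem_Ici.2 (by positivity)) ?_
        rw [lt_div_iff₀ hη] at hlt
        rw [div_le_div_iff₀ (by norm_num) hρ]
        nlinarith
      rw [Nat.Ico_zero_eq_range] at hν1
      linarith
  have hsup := hnorming a hmem
  have h2 : 2 ≤ η * orliczNorm M a := by
    rw [div_le_iff₀ hη] at hnorm
    linarith
  have hle : (⨆ A : K, orliczNorm M (Set.indicator (toSet A.1) a)) ≤ 1 := by
    refine Real.iSup_le (fun A => ?_) zero_le_one
    refine csInf_le ⟨0, fun ρ h => h.1.le⟩ ⟨one_pos, ?_⟩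
    have hA := hνA ∅ (by simp) A.1 A.2 (by simp)
    rw [Nat.Ico_zero_eq_range] at hA
    rw [tsum_eq_sum (s := Finset.range N)]
    · have : δ * ∑ k ∈ Finset.range N, M (|Set.indicator (toSet A.1) a k| / 1) ≤
          ∑ k ∈ Finset.range N, (if A.1 k = true then ν k else 0) := by
        rw [Finset.mul_sum]
        refine Finset.sum_le_sum fun k hk => ?_
        by_cases hAk : A.1 k = true
        · rw [if_pos hAk, Set.indicator_of_mem (show k ∈ toSet A.1 from hAk), _root_.div_one,
            abs_of_nonneg (ha0 k), haeq k hk, hτ2 k]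
          exact hτ1 k
        · rw [if_neg hAk, Set.indicator_of_notMem (show k ∉ toSet A.1 from hAk)]
          simp [hM.zero]
      have h3 := this.trans hA
      by_contra hgt
      push Not at hgt
      nlinarith
    · intro k hk
      have : Set.indicator (toSet A.1) a k = 0 := by
        rw [Set.indicator_apply, hazero k hk, ite_self]
      simp [this, hM.zero]
  linarith
end

section
/- For every nondegenerate Orlicz function M, the following statements are equivalent: (1) there exists a constant η > 0 such that lim_{t→0} M(ηt)/M(t) = 0; (2) the Orlicz sequence space h_M embeds isomorphically into C(ω^ω); (3) the Orlicz sequence space h_M embeds isomorphically into C(α) for some countable ordinal α. -/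
open Ordinal Filter Topology

namespace OrlE

lemma M_nonneg {M : ℝ → ℝ} (hM : IsOrlicz M) {t : ℝ} (ht : 0 ≤ t) : 0 ≤ M t := by
  rcases ht.eq_or_lt with h | h
  · rw [← h, hM.zero]
  · exact (hM.pos t h).le

lemma M_mono {M : ℝ → ℝ} (hM : IsOrlicz M) {s t : ℝ} (hs : 0 ≤ s) (h : s ≤ t) : M s ≤ M t :=
  hM.mono hs (hs.trans h) h

lemma M_smul {M : ℝ → ℝ} (hM : IsOrlicz M) {s t : ℝ} (hs : 0 ≤ s) (hs1 : s ≤ 1) (ht : 0 ≤ t) :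
    M (s * t) ≤ s * M t := by
  have := hM.convex.2 (Set.mem_Ici.2 ht) (Set.mem_Ici.2 (le_refl (0:ℝ))) hs
    (sub_nonneg.2 hs1) (by ring)
  simpa [hM.zero] using this

lemma M_le {M : ℝ → ℝ} (hM : IsOrlicz M) {t : ℝ} (ht : 0 ≤ t) (ht1 : t ≤ 1) : M t ≤ t := by
  have := M_smul hM ht ht1 zero_le_one
  simpa [hM.one] using this

lemma M_ge {M : ℝ → ℝ} (hM : IsOrlicz M) {t : ℝ} (ht1 : 1 ≤ t) : t ≤ M t := by
  have h0 : 0 < t := by linarith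
  have := M_smul hM (s := t⁻¹) (t := t) (by positivity) (inv_le_one_of_one_le₀ ht1) h0.le
  rw [inv_mul_cancel₀ h0.ne', hM.one] at this
  rw [inv_mul_eq_div, le_div_iff₀ h0] at this
  linarith

/-- A weak version of membership. -/
def Mem' (M : ℝ → ℝ) (a : ℕ → ℝ) : Prop :=
  ∀ c : ℝ, 0 ≤ c → Summable fun k => M (c * |a k|)

lemma Mem'.div {M : ℝ → ℝ} {a : ℕ → ℝ} (h : Mem' M a) {ρ : ℝ} (hρ : 0 < ρ) :
    Summable fun k => M (|a k| / ρ) := by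
  have := h ρ⁻¹ (by positivity)
  simpa [div_eq_inv_mul] using this

lemma norm_nonempty {M : ℝ → ℝ} (hM : IsOrlicz M) {a : ℕ → ℝ} (h : Mem' M a) :
    {ρ : ℝ | 0 < ρ ∧ (∑' k, M (|a k| / ρ)) ≤ 1}.Nonempty := by
  set S := ∑' k, M (|a k|)
  have hs : Summable fun k => M (|a k|) := by simpa using h 1 zero_le_one
  set ρ := max 1 S
  have h1 : 1 ≤ ρ := le_max_left _ _
  have h0 : 0 < ρ := by linarith
  refine ⟨ρ, h0, ?_⟩
  calc ∑' k, M (|a k| / ρ) ≤ ∑' k, ρ⁻¹ * M (|a k|) := by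
        refine (h.div h0).tsum_le_tsum (fun k => ?_) (hs.mul_left _)
        rw [div_eq_inv_mul]
        exact M_smul hM (by positivity) (inv_le_one_of_one_le₀ h1) (abs_nonneg _)
    _ = ρ⁻¹ * S := tsum_mul_left
    _ ≤ ρ⁻¹ * ρ := by gcongr; exact le_max_right _ _
    _ = 1 := inv_mul_cancel₀ h0.ne'

lemma norm_le {M : ℝ → ℝ} {a : ℕ → ℝ} {ρ : ℝ} (hρ : 0 < ρ)
    (h : (∑' k, M (|a k| / ρ)) ≤ 1) : orliczNorm M a ≤ ρ :=
  csInf_le ⟨0, fun _ hx => hx.1.le⟩ ⟨hρ, h⟩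

lemma le_norm {M : ℝ → ℝ} (hM : IsOrlicz M) {a : ℕ → ℝ} (h : Mem' M a) {r : ℝ} (hr : 0 < r)
    (h1 : 1 < ∑' k, M (|a k| / r)) : r ≤ orliczNorm M a := by
  refine le_csInf (norm_nonempty hM h) ?_
  rintro ρ ⟨hρ, hρ1⟩
  by_contra! hlt
  have : ∑' k, M (|a k| / r) ≤ ∑' k, M (|a k| / ρ) := by
    refine (h.div hr).tsum_le_tsum (fun k => ?_) (h.div hρ)
    exact M_mono hM (by positivity) (by gcongr)
  linarith

lemma memHM_of_finite {M : ℝ → ℝ} (hM : IsOrlicz M) {a : ℕ → ℝ} (h : (Function.support a).Finite) :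
    MemHM M a := by
  intro c
  refine summable_of_hasFiniteSupport (h.subset ?_)
  intro k hk
  simp only [Function.mem_support] at hk ⊢
  rintro h0
  simp [h0, hM.zero] at hk

lemma MemHM.mem' {M : ℝ → ℝ} {a : ℕ → ℝ} (h : MemHM M a) : Mem' M a := fun c _ => h c

/-- finitely supported vectors -/
def vec {ι : Type} (κ : ι → ℕ) (G : Finset ι) (d : ι → ℝ) : ℕ → ℝ :=
  ∑ j ∈ G, d j • (Pi.single (κ j) (1:ℝ) : ℕ → ℝ)

lemma vec_apply {ι : Type} [DecidableEq ι] {κ : ι → ℕ} (hκ : Function.Injective κ) (G : Finset ι) (d : ι → ℝ)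
    {j : ι} (hj : j ∈ G) : vec κ G d (κ j) = d j := by
  simp only [vec, Finset.sum_apply, Pi.smul_apply]
  rw [Finset.sum_eq_single j]
  · simp
  · intro b _ hb
    rw [Pi.single_eq_of_ne (fun h => hb (hκ h).symm)]; simp
  · exact fun h => absurd hj h

lemma vec_apply_ne {ι : Type} [DecidableEq ι] {κ : ι → ℕ} (G : Finset ι) (d : ι → ℝ)
    {m : ℕ} (hm : ∀ j ∈ G, κ j ≠ m) : vec κ G d m = 0 := by
  simp only [vec, Finset.sum_apply, Pi.smul_apply]
  refine Finset.sum_eq_zero fun j hj => ?_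
  rw [Pi.single_eq_of_ne (hm j hj).symm]; simp

lemma vec_tsum {M : ℝ → ℝ} (hM : IsOrlicz M) {ι : Type} [DecidableEq ι] {κ : ι → ℕ}
    (hκ : Function.Injective κ) (G : Finset ι) (d : ι → ℝ) (ρ : ℝ) :
    ∑' m, M (|vec κ G d m| / ρ) = ∑ j ∈ G, M (|d j| / ρ) := by
  rw [tsum_eq_sum (s := G.map ⟨κ, hκ⟩)]
  · rw [Finset.sum_map]
    refine Finset.sum_congr rfl fun j hj => ?_
    simp only [Function.Embedding.coeFn_mk]
    rw [vec_apply hκ G d hj]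
  · intro m hm
    rw [vec_apply_ne]
    · simp [hM.zero]
    · intro j hj h
      exact hm (Finset.mem_map.2 ⟨j, hj, h⟩)

lemma vec_mem {M : ℝ → ℝ} (hM : IsOrlicz M) {ι : Type} [DecidableEq ι] (κ : ι → ℕ)
    (G : Finset ι) (d : ι → ℝ) : MemHM M (vec κ G d) := by
  classical
  refine memHM_of_finite hM ((G.image κ).finite_toSet.subset fun m hm => ?_)
  by_contra h
  refine hm (vec_apply_ne G d fun j hj hh => h ?_)
  exact Finset.mem_coe.2 (Finset.mem_image.2 ⟨j, hj, hh⟩)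

lemma T_vec {M : ℝ → ℝ} (hM : IsOrlicz M) {E : Type*} [AddCommGroup E] [Module ℝ E]
    (T : (ℕ → ℝ) → E)
    (hadd : ∀ a b : ℕ → ℝ, MemHM M a → MemHM M b → T (a + b) = T a + T b)
    (hsmul : ∀ (c : ℝ) (a : ℕ → ℝ), MemHM M a → T (c • a) = c • T a)
    {ι : Type} [DecidableEq ι] (κ : ι → ℕ) (G : Finset ι) (d : ι → ℝ) :
    T (vec κ G d) = ∑ j ∈ G, d j • T (Pi.single (κ j) 1) := by
  have hs : ∀ k : ℕ, MemHM M (Pi.single k (1:ℝ)) := fun k => by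
    refine memHM_of_finite hM ((Set.finite_singleton k).subset fun m hm => ?_)
    by_contra h
    exact hm (Pi.single_eq_of_ne h _)
  induction G using Finset.induction_on with
  | empty =>
    have := hsmul 0 0 (memHM_of_finite hM (by simp))
    simpa [vec] using this
  | insert j G hj ih =>
    rw [Finset.sum_insert hj, ← ih, ← hsmul _ _ (hs _), ← hadd]
    · simp [vec, Finset.sum_insert hj]
    · have := vec_mem hM κ {j} d
      simpa [vec] using this
    · exact vec_mem hM κ G d

lemma countable_Iic {α : Ordinal} (h : α < omega1) : Countable (Set.Iic α) := by
  have h2 : Order.succ α < omega1 := by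
    have hl : Order.IsSuccLimit omega1 := Cardinal.isSuccLimit_ord (Cardinal.aleph0_le_aleph 1)
    exact hl.succ_lt h
  have h3 : (Order.succ α).card < Cardinal.aleph 1 := Cardinal.lt_ord.1 h2
  have h4 : (Order.succ α).card ≤ Cardinal.aleph0 := by
    rw [← Cardinal.succ_aleph0] at h3
    exact Order.lt_succ_iff.1 h3
  rw [← Order.Iio_succ]
  rw [← Cardinal.mk_le_aleph0_iff, Cardinal.mk_Iio_ordinal]
  rw [Cardinal.lift_le_aleph0]; exact h4

/-- The sequence extracted from an embedding. -/
lemma extract {M : ℝ → ℝ} (hM : IsOrlicz M) {α : Ordinal} (hα : α < omega1)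
    (hE : EmbedsHM M α) : ∃ c₁ > (0:ℝ), ∃ c₂ > (0:ℝ), ∃ v : ℕ → COrd α,
      (∀ β, Tendsto (fun s => v s β) atTop (𝓝 0)) ∧
      (∀ (F : Finset ℕ) (c : ℕ → ℝ), 1 < ∑ s ∈ F, 2 * M |c s| → c₁ ≤ ‖∑ s ∈ F, c s • v s‖) ∧
      (∀ (F : Finset ℕ) (c : ℕ → ℝ) (ρ : ℝ), 0 < ρ → ∑ s ∈ F, 2 * M (|c s| / ρ) ≤ 1 →
        ‖∑ s ∈ F, c s • v s‖ ≤ c₂ * ρ) := by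
  obtain ⟨T, hadd, hsmul, c₁, hc₁, c₂, hc₂, hb⟩ := hE
  have := countable_Iic hα
  have hbd : ∀ k β, |T (Pi.single k 1) β| ≤ c₂ := by
    intro k β
    have e : (Pi.single k (1:ℝ) : ℕ → ℝ) = vec id {k} (fun _ => 1) := by simp [vec]
    have h1 := (hb _ (vec_mem hM id {k} (fun _ => 1))).2
    have h2 : orliczNorm M (vec id {k} (fun _ => 1)) ≤ 1 := by
      refine norm_le one_pos ?_
      rw [vec_tsum hM Function.injective_id]
      simp [hM.one]
    rw [e]
    calc |T (vec id {k} (fun _ => 1)) β| ≤ ‖T (vec id {k} (fun _ => 1))‖ := by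
          rw [← Real.norm_eq_abs]; exact BoundedContinuousFunction.norm_coe_le_norm _ β
      _ ≤ c₂ * 1 := h1.trans (by gcongr)
      _ = c₂ := mul_one _
  have hcpt : IsCompact (Set.pi Set.univ (fun _ : Set.Iic α => Set.Icc (-c₂) c₂)) :=
    isCompact_univ_pi fun _ => isCompact_Icc
  obtain ⟨L, -, k, hk, hL⟩ := hcpt.tendsto_subseq (x := fun k β => T (Pi.single k 1) β)
    (fun k β _ => abs_le.1 (hbd k β))
  rw [tendsto_pi_nhds] at hL
  let κ : ℕ × Bool → ℕ := fun p => k (2 * p.1 + p.2.toNat)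
  have hκ : Function.Injective κ := by
    rintro ⟨s, b⟩ ⟨s', b'⟩ h
    have := hk.injective h
    cases b <;> cases b' <;> simp at this ⊢ <;> omega
  let sg : Bool → ℝ := fun b => if b then -1 else 1
  have hsum : ∀ (F : Finset ℕ) (c : ℕ → ℝ),
      T (vec κ (F ×ˢ Finset.univ) (fun p => c p.1 * sg p.2)) =
      ∑ s ∈ F, c s • (T (Pi.single (k (2 * s)) 1) - T (Pi.single (k (2 * s + 1)) 1)) := by
    intro F c
    rw [T_vec hM T hadd hsmul, Finset.sum_product]
    refine Finset.sum_congr rfl fun s _ => ?_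
    simp [κ, sg, sub_eq_add_neg, add_comm]
  have hmod : ∀ (F : Finset ℕ) (c : ℕ → ℝ) (ρ : ℝ),
      ∑' m, M (|vec κ (F ×ˢ Finset.univ) (fun p => c p.1 * sg p.2) m| / ρ) =
      ∑ s ∈ F, 2 * M (|c s| / ρ) := by
    intro F c ρ
    rw [vec_tsum hM hκ, Finset.sum_product]
    refine Finset.sum_congr rfl fun s _ => ?_
    simp [sg, two_mul]
  refine ⟨c₁, hc₁, c₂, hc₂,
    fun s => T (Pi.single (k (2 * s)) 1) - T (Pi.single (k (2 * s + 1)) 1), ?_, ?_, ?_⟩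
  · intro β
    have h1 : Tendsto (fun s : ℕ => 2 * s) atTop atTop :=
      tendsto_atTop_mono (fun s => by simp only [id]; omega) tendsto_id
    have h2 : Tendsto (fun s : ℕ => 2 * s + 1) atTop atTop :=
      tendsto_atTop_mono (fun s => by simp only [id]; omega) tendsto_id
    have := ((hL β).comp h1).sub ((hL β).comp h2)
    simpa using this
  · intro F c h
    rw [← hsum]
    have h3 := vec_mem hM κ (F ×ˢ Finset.univ) (fun p => c p.1 * sg p.2)
    refine le_trans ?_ (hb _ h3).1
    have := le_norm hM (MemHM.mem' h3) one_pos (by rw [hmod]; simpa using h)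
    nlinarith
  · intro F c ρ hρ h
    rw [← hsum]
    have h3 := vec_mem hM κ (F ×ˢ Finset.univ) (fun p => c p.1 * sg p.2)
    refine (hb _ h3).2.trans ?_
    gcongr
    exact norm_le hρ (by rw [hmod]; exact h)

lemma mazur_aux {α : Ordinal} (ψ : ℕ → Set.Iic α → ℝ) (hc : ∀ i, Continuous (ψ i))
    (h1 : ∀ i γ, ψ i γ ≤ 1)
    (hn : ∀ γ, Tendsto (fun i => ψ i γ) atTop (𝓝 0)) (β : Set.Iic α) :
    ∀ ε > (0:ℝ), ∀ N : ℕ, ∃ g ∈ convexHull ℝ (ψ '' Set.Ici N), ∀ γ ≤ β, g γ ≤ ε := by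
  induction β using WellFoundedLT.induction with
  | ind β ih =>
  intro ε hε N
  obtain ⟨N0, hN0, hN⟩ : ∃ N0 ≥ N, ∀ i ≥ N0, ψ i β < ε / 2 := by
    have := ((hn β).eventually (gt_mem_nhds (half_pos hε))).and (eventually_ge_atTop N)
    obtain ⟨N0, h⟩ := eventually_atTop.1 this
    exact ⟨N0, (h N0 le_rfl).2, fun i hi => (h i hi).1⟩
  have hsub : convexHull ℝ (ψ '' Set.Ici N0) ⊆ convexHull ℝ (ψ '' Set.Ici N) :=
    convexHull_mono (Set.image_mono (Set.Ici_subset_Ici.2 hN0))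
  have hC : convexHull ℝ (ψ '' Set.Ici N0) ⊆
      {g | Continuous g ∧ (∀ γ, g γ ≤ 1) ∧ g β < ε / 2} := by
    refine convexHull_min ?_ ?_
    · rintro _ ⟨i, hi, rfl⟩
      exact ⟨hc i, h1 i, hN i hi⟩
    · rintro g ⟨g1, g2, g3⟩ h ⟨k1, k2, k3⟩ a b ha hb hab
      refine ⟨(g1.const_smul a).add (k1.const_smul b), fun γ => ?_, ?_⟩
      · simp only [Pi.add_apply, Pi.smul_apply, _root_.smul_eq_mul]
        nlinarith [g2 γ, k2 γ]
      · have := (convex_Iio (𝕜 := ℝ) (ε/2)) g3 k3 ha hb hab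
        simpa using this
  by_cases hmin : ∃ l, l < β
  swap
  · refine ⟨ψ N0, hsub (subset_convexHull _ _ ⟨N0, Set.mem_Ici.2 le_rfl, rfl⟩), fun γ hγ => ?_⟩
    have : γ = β := by
      by_contra hne
      exact hmin ⟨γ, lt_of_le_of_ne hγ hne⟩
    rw [this]
    linarith [hN N0 le_rfl]
  have hnear : ∀ g ∈ convexHull ℝ (ψ '' Set.Ici N0), ∃ b < β, ∀ γ, b < γ → γ ≤ β → g γ ≤ ε / 2 := by
    intro g hg
    obtain ⟨g1, g2, g3⟩ := hC hg
    have := g1.continuousAt.eventually (gt_mem_nhds g3)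
    obtain ⟨l, hl, hs⟩ := exists_Ioc_subset_of_mem_nhds this hmin
    exact ⟨l, hl, fun γ h h' => le_of_lt (hs ⟨h, h'⟩)⟩
  have key : ∀ J : ℕ, ∃ h : Set.Iic α → ℝ, ((J:ℝ) + 1)⁻¹ • h ∈ convexHull ℝ (ψ '' Set.Ici N0) ∧
      ∃ b < β, (∀ γ ≤ β, h γ ≤ (J + 1) * (ε / 2) + 1) ∧
        (∀ γ, b < γ → γ ≤ β → h γ ≤ (J + 1) * (ε / 2)) := by
    intro J
    induction J with
    | zero =>
      have hm : ψ N0 ∈ convexHull ℝ (ψ '' Set.Ici N0) :=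
        subset_convexHull _ _ ⟨N0, Set.mem_Ici.2 le_rfl, rfl⟩
      obtain ⟨b, hb, hb'⟩ := hnear _ hm
      refine ⟨ψ N0, by simpa using hm, b, hb, fun γ _ => ?_, fun γ h h' => ?_⟩
      · have := h1 N0 γ
        simp only [CharP.cast_eq_zero]; linarith
      · have := hb' γ h h'
        simp only [CharP.cast_eq_zero]; linarith
    | succ J ihJ =>
      obtain ⟨h, hh, b, hb, hA, hB⟩ := ihJ
      obtain ⟨g, hg, hgb⟩ := ih b hb (ε / 2) (half_pos hε) N0
      obtain ⟨b', hb', hgb'⟩ := hnear g hg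
      obtain ⟨-, g2, -⟩ := hC hg
      refine ⟨h + g, ?_, max b b', max_lt hb hb', fun γ hγ => ?_, fun γ hγ hγ' => ?_⟩
      · have := convex_convexHull ℝ (ψ '' Set.Ici N0) hh hg (a := ((J:ℝ)+1)/(J+2)) (b := 1/(J+2))
          (by positivity) (by positivity) (by field_simp; ring)
        convert this using 1
        rw [smul_add, smul_smul]
        push_cast
        congr 2
        · field_simp; ring
        · rw [one_div]; congr 1; ring
      · simp only [Pi.add_apply]
        push_cast
        rcases le_or_gt γ b with hle | hlt
        · have := hA γ hγ
          have := hgb γ hle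
          linarith
        · have := hB γ hlt hγ
          have := g2 γ
          linarith
      · simp only [Pi.add_apply]
        push_cast
        have := hB γ (lt_of_le_of_lt (le_max_left _ _) hγ) hγ'
        have := hgb' γ (lt_of_le_of_lt (le_max_right _ _) hγ) hγ'
        linarith
  obtain ⟨J, hJ⟩ := exists_nat_gt (2 / ε)
  obtain ⟨h, hh, b, hb, hA, -⟩ := key J
  refine ⟨_, hsub hh, fun γ hγ => ?_⟩
  have := hA γ hγ
  simp only [Pi.smul_apply, _root_.smul_eq_mul]
  rw [inv_mul_le_iff₀ (by positivity)]
  rw [div_lt_iff₀ hε] at hJ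
  nlinarith

lemma mazur {α : Ordinal} (ψ : ℕ → Set.Iic α → ℝ) (hc : ∀ i, Continuous (ψ i))
    (h1 : ∀ i γ, ψ i γ ≤ 1)
    (hn : ∀ γ, Tendsto (fun i => ψ i γ) atTop (𝓝 0)) (ε : ℝ) (hε : 0 < ε) :
    ∃ (F : Finset ℕ) (w : ℕ → ℝ), (∀ i ∈ F, 0 ≤ w i) ∧ ∑ i ∈ F, w i = 1 ∧
      ∀ γ, ∑ i ∈ F, w i * ψ i γ ≤ ε := by
  obtain ⟨g, hg, hg'⟩ := mazur_aux ψ hc h1 hn ⟨α, Set.mem_Iic.2 le_rfl⟩ ε hε 0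
  have hr : ψ '' Set.Ici 0 = Set.range ψ := by
    have : Set.Ici (0:ℕ) = Set.univ := by ext; simp
    rw [this, Set.image_univ]
  rw [hr, convexHull_range_eq_exists_affineCombination] at hg
  obtain ⟨F, w, hw0, hw1, rfl⟩ := hg
  refine ⟨F, w, hw0, hw1, fun γ => ?_⟩
  have := hg' γ γ.2
  rw [Finset.affineCombination_eq_linear_combination _ _ _ hw1] at this
  simpa [Finset.sum_apply] using this

lemma sum_half_le (F : Finset ℕ) : ∑ i ∈ F, ((1:ℝ)/2)^i ≤ 2 := by
  have := summable_geometric_two.sum_le_tsum F (fun i _ => by positivity)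
  rwa [tsum_geometric_two] at this


lemma three_to_one {M : ℝ → ℝ} (hM : IsOrlicz M) {α : Ordinal} (hα : α < omega1)
    (hE : EmbedsHM M α) :
    ∃ η > (0 : ℝ), Tendsto (fun t => M (η * t) / M t) (𝓝[>] (0 : ℝ)) (𝓝 0) := by
  obtain ⟨c₁, hc₁, c₂, hc₂, v, hv, hL, hU⟩ := extract hM hα hE
  by_contra hcon
  push Not at hcon
  set η := c₁ / (4 * c₂) with hη
  have hη0 : 0 < η := by positivity
  have hcη : c₂ * η = c₁ / 4 := by rw [hη]; field_simp
  obtain ⟨δ, hδ, hfr⟩ : ∃ δ > (0:ℝ), ∃ᶠ t in 𝓝[>] (0:ℝ), δ * M t ≤ M (η * t) := by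
    by_contra! hc
    refine hcon η hη0 ?_
    rw [Metric.tendsto_nhds]
    intro δ hδ
    have h1 := hc δ hδ
    filter_upwards [h1, self_mem_nhdsWithin] with t ht ht0
    have ht0' : 0 < t := ht0
    rw [Real.dist_eq, _root_.sub_zero, abs_of_nonneg
      (div_nonneg (M_nonneg hM (by positivity)) (M_nonneg hM ht0'.le)),
      div_lt_iff₀ (hM.pos t ht0')]
    exact ht
  have ht : ∀ i : ℕ, ∃ t : ℝ, 0 < t ∧ t ≤ (1/2)^i / 8 ∧ δ * M t ≤ M (η * t) := by
    intro i
    have h1 : ∀ᶠ t in 𝓝[>] (0:ℝ), 0 < t ∧ t ≤ (1/2)^i / 8 := by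
      have := Ioc_mem_nhdsGT (show (0:ℝ) < (1/2)^i / 8 by positivity)
      filter_upwards [this] with t ht using ht
    obtain ⟨t, h2, h3, h4⟩ := (hfr.and_eventually h1).exists
    exact ⟨t, h3, h4, h2⟩
  choose t ht0 ht1 ht2 using ht
  have hMt : ∀ i, M (t i) ≤ (1/2)^i / 8 := by
    intro i
    refine (M_le hM (ht0 i).le ((ht1 i).trans ?_)).trans (ht1 i)
    have : ((1:ℝ)/2)^i ≤ 1 := pow_le_one₀ (by norm_num) (by norm_num)
    linarith
  have hP0 : ∀ i, 0 < M (η * t i) := fun i => hM.pos _ (mul_pos hη0 (ht0 i))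
  set m : ℕ → ℕ := fun i => ⌈1 / M (η * t i)⌉₊ with hm
  set θ : ℕ → ℝ := fun i => c₁ / 8 * (1/2)^i with hθ
  have hθ0 : ∀ i, 0 < θ i := fun i => by positivity
  have := countable_Iic hα
  have : Nonempty (Set.Iic α) := ⟨⟨α, Set.mem_Iic.2 le_rfl⟩⟩
  obtain ⟨f, hf⟩ := exists_surjective_nat (Set.Iic α)
  have hN : ∀ i : ℕ, ∃ N : ℕ, ∀ s ≥ N, ∀ j ≤ i,
      |v s (f j)| ≤ θ i * (1/2)^i / (m i * (η * t i) + 1) := by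
    intro i
    have hpos : 0 < θ i * (1/2)^i / (m i * (η * t i) + 1) := by
      have := hθ0 i
      have := ht0 i
      positivity
    have : ∀ᶠ s in atTop, ∀ j ∈ Finset.Iic i,
        |v s (f j)| ≤ θ i * (1/2)^i / (m i * (η * t i) + 1) := by
      rw [Finset.eventually_all]
      intro j _
      have := (hv (f j)).abs
      rw [abs_zero] at this
      filter_upwards [this.eventually (gt_mem_nhds hpos)] with s hs using hs.le
    obtain ⟨N, hN⟩ := eventually_atTop.1 this
    exact ⟨N, fun s hs j hj => hN s hs j (Finset.mem_Iic.2 hj)⟩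
  choose N hN using hN
  set B : ℕ → ℕ → ℕ := fun i r => Nat.pair i (N i + r) with hB
  have hBN : ∀ i r, N i ≤ B i r := fun i r =>
    le_trans (Nat.le_add_right _ _) (Nat.right_le_pair i (N i + r))
  set A : ℕ → Set.Iic α → ℝ := fun i β => ∑ r ∈ Finset.range (m i), (η * t i) * |v (B i r) β|
    with hA
  have hA0 : ∀ i β, 0 ≤ A i β := fun i β => Finset.sum_nonneg fun r _ => by
    have := ht0 i
    positivity
  have hAc : ∀ i, Continuous (A i) := fun i => by
    refine continuous_finsetSum _ fun r _ => ?_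
    exact continuous_const.mul (v (B i r)).continuous.abs
  obtain ⟨F, w, hw0, hw1, hw⟩ := mazur (fun i β => min 1 (A i β / θ i))
    (fun i => continuous_const.min ((hAc i).div_const _))
    (fun i γ => min_le_left _ _)
    (by
      intro γ
      obtain ⟨j, rfl⟩ := hf γ
      refine squeeze_zero' (g := fun i : ℕ => ((1:ℝ)/2)^i) (Eventually.of_forall fun i =>
        le_min zero_le_one (div_nonneg (hA0 i _) (hθ0 i).le)) ?_
        (tendsto_pow_atTop_nhds_zero_of_lt_one (by norm_num) (by norm_num))
      filter_upwards [eventually_ge_atTop j] with i hi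
      refine (min_le_right _ _).trans ?_
      rw [div_le_iff₀ (hθ0 i)]
      have hti := ht0 i
      have hθi := hθ0 i
      calc A i (f j) ≤ ∑ r ∈ Finset.range (m i),
            (η * t i) * (θ i * (1/2)^i / (m i * (η * t i) + 1)) := by
            refine Finset.sum_le_sum fun r _ => ?_
            gcongr
            exact hN i _ (hBN i r) j hi
        _ = (m i * (η * t i)) * (θ i * (1/2)^i / (m i * (η * t i) + 1)) := by
            rw [Finset.sum_const, Finset.card_range, _root_.nsmul_eq_mul]; ring
        _ ≤ (m i * (η * t i) + 1) * (θ i * (1/2)^i / (m i * (η * t i) + 1)) := by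
            gcongr; linarith
        _ = (1/2)^i * θ i := by
            field_simp)
    (δ / 4) (by positivity)
  set n : ℕ → ℕ := fun i => ⌈w i / M (η * t i)⌉₊ with hn
  have hnm : ∀ i ∈ F, n i ≤ m i := by
    intro i hi
    refine Nat.ceil_mono ?_
    have := hP0 i
    gcongr
    rw [← hw1]
    exact Finset.single_le_sum hw0 hi
  set G : Finset ℕ → Finset ℕ := fun S => S.biUnion fun i => (Finset.range (n i)).image (B i) with hG
  have hBinj : ∀ i r i' r', B i r = B i' r' → i = i' ∧ r = r' := by
    intro i r i' r' h
    obtain ⟨h1, h2⟩ := Nat.pair_eq_pair.1 h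
    subst h1
    exact ⟨rfl, by omega⟩
  have hGs : ∀ (S : Finset ℕ) (q : ℕ → ℝ),
      ∑ s ∈ G S, q s = ∑ i ∈ S, ∑ r ∈ Finset.range (n i), q (B i r) := by
    intro S q
    rw [hG, Finset.sum_biUnion]
    · refine Finset.sum_congr rfl fun i _ => ?_
      rw [Finset.sum_image]
      intro r _ r' _ h
      exact (hBinj _ _ _ _ h).2
    · intro i _ i' _ hne
      rw [Function.onFun, Finset.disjoint_left]
      intro s hs hs'
      obtain ⟨r, _, rfl⟩ := Finset.mem_image.1 hs
      obtain ⟨r', _, h⟩ := Finset.mem_image.1 hs'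
      exact hne (hBinj _ _ _ _ h).1.symm
  set c : ℕ → ℝ := fun s => η * t (Nat.unpair s).1 with hc
  have hcB : ∀ i r, c (B i r) = η * t i := by
    intro i r
    simp [hc, hB]
  have habs : ∀ i, |η * t i| = η * t i := fun i => abs_of_pos (mul_pos hη0 (ht0 _))
  have h1 : c₁ ≤ ‖∑ s ∈ G F, c s • v s‖ := by
    refine hL (G F) c ?_
    rw [hGs]
    simp only [hcB, habs]
    calc (1:ℝ) < 2 * ∑ i ∈ F, w i := by rw [hw1]; norm_num
      _ = ∑ i ∈ F, 2 * w i := Finset.mul_sum _ _ _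
      _ ≤ _ := by
        refine Finset.sum_le_sum fun i hi => ?_
        rw [Finset.sum_const, Finset.card_range, _root_.nsmul_eq_mul]
        have := Nat.le_ceil (w i / M (η * t i))
        rw [div_le_iff₀ (hP0 i)] at this
        linarith
  have h2 : ‖∑ s ∈ G F, c s • v s‖ ≤ c₁ / 2 := by
    rw [BoundedContinuousFunction.norm_le (by positivity)]
    intro β
    set S := F.filter (fun i => θ i < A i β) with hS
    have hev : ∀ S' : Finset ℕ, (∑ s ∈ G S', c s • v s) β =
        ∑ i ∈ S', ∑ r ∈ Finset.range (n i), (η * t i) * v (B i r) β := by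
      intro S'
      rw [BoundedContinuousFunction.sum_apply]
      simp only [BoundedContinuousFunction.smul_apply, _root_.smul_eq_mul]
      rw [hGs]
      simp only [hcB]
    have hS1 : |(∑ s ∈ G S, c s • v s) β| ≤ c₁ / 4 := by
      have := hU (G S) c η hη0 ?_
      · rw [hcη] at this
        refine le_trans ?_ this
        rw [← Real.norm_eq_abs]
        exact BoundedContinuousFunction.norm_coe_le_norm _ β
      · rw [hGs]
        simp only [hcB, habs]
        have hwS : ∑ i ∈ S, w i ≤ δ / 4 := by
          refine le_trans ?_ (hw β)
          calc ∑ i ∈ S, w i = ∑ i ∈ S, w i * min 1 (A i β / θ i) := by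
                refine Finset.sum_congr rfl fun i hi => ?_
                rw [min_eq_left, mul_one]
                rw [one_le_div (hθ0 i)]
                exact (Finset.mem_filter.1 hi).2.le
            _ ≤ _ := by
                refine Finset.sum_le_sum_of_subset_of_nonneg (Finset.filter_subset _ _) ?_
                intro i hi _
                exact mul_nonneg (hw0 i hi)
                  (le_min zero_le_one (div_nonneg (hA0 i _) (hθ0 i).le))
        calc _ ≤ ∑ i ∈ S, (2 / δ * w i + (1/4) * (1/2)^i) := by
              refine Finset.sum_le_sum fun i hi => ?_
              rw [Finset.sum_const, Finset.card_range, _root_.nsmul_eq_mul,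
                mul_div_cancel_left₀ _ hη0.ne']
              have hwi := hw0 i (Finset.mem_filter.1 hi).1
              have h3 : (n i : ℝ) ≤ w i / M (η * t i) + 1 :=
                (Nat.ceil_lt_add_one (div_nonneg hwi (hP0 i).le)).le
              have h4 : M (t i) ≤ M (η * t i) / δ := by
                rw [le_div_iff₀ hδ]; linarith [ht2 i]
              have h5 := hM.pos _ (ht0 i)
              have h6 : w i / M (η * t i) * M (t i) ≤ w i / δ := by
                calc w i / M (η * t i) * M (t i) ≤ w i / M (η * t i) * (M (η * t i) / δ) := by
                      have := hP0 i
                      gcongr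
                  _ = w i / δ := by
                      have := (hP0 i).ne'
                      field_simp
              calc (n i : ℝ) * (2 * M (t i)) ≤ (w i / M (η * t i) + 1) * (2 * M (t i)) := by
                    gcongr
                _ = 2 * (w i / M (η * t i) * M (t i)) + 2 * M (t i) := by ring
                _ ≤ 2 * (w i / δ) + 2 * ((1/2)^i / 8) := by
                    have := hMt i
                    linarith
                _ = _ := by ring
          _ = 2 / δ * ∑ i ∈ S, w i + (1/4) * ∑ i ∈ S, (1/2)^i := by
              rw [Finset.sum_add_distrib, Finset.mul_sum, Finset.mul_sum]
          _ ≤ 2 / δ * (δ / 4) + (1/4) * 2 := by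
              gcongr
              exact sum_half_le S
          _ = 1 := by field_simp; norm_num
    have hS2 : |∑ i ∈ F.filter (fun i => ¬ θ i < A i β),
        ∑ r ∈ Finset.range (n i), (η * t i) * v (B i r) β| ≤ c₁ / 4 := by
      calc _ ≤ ∑ i ∈ F.filter (fun i => ¬ θ i < A i β), θ i := by
            refine (Finset.abs_sum_le_sum_abs _ _).trans (Finset.sum_le_sum fun i hi => ?_)
            obtain ⟨hiF, hiA⟩ := Finset.mem_filter.1 hi
            refine le_trans ?_ (not_lt.1 hiA)
            refine (Finset.abs_sum_le_sum_abs _ _).trans ?_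
            simp only [abs_mul, abs_of_pos hη0, abs_of_pos (ht0 i)]
            refine Finset.sum_le_sum_of_subset_of_nonneg (Finset.range_mono (hnm i hiF)) ?_
            intro r _ _
            have := ht0 i
            positivity
        _ = c₁ / 8 * ∑ i ∈ F.filter (fun i => ¬ θ i < A i β), (1/2)^i := by
            rw [Finset.mul_sum]
        _ ≤ c₁ / 8 * 2 := by gcongr; exact sum_half_le _
        _ = c₁ / 4 := by ring
    rw [hev, ← Finset.sum_filter_add_sum_filter_not F (fun i => θ i < A i β), ← hS, ← hev S,
      Real.norm_eq_abs]
    refine (abs_add_le _ _).trans ?_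
    linarith
  linarith


lemma glue {X : Type} [TopologicalSpace X] (f : ℕ → Ordinal.{1} → X) (hf : ∀ m, Continuous (f m))
    (α : ℕ → Ordinal.{1}) (A : Ordinal.{1}) (hα0 : α 0 = 0) (hα : StrictMono α)
    (hαA : ∀ m, α m < A) (hcof : ∀ β < A, ∃ m, β < α m) (x : X)
    (hx : Tendsto (fun p : ℕ × Ordinal.{1} => f p.1 p.2) (atTop ×ˢ ⊤) (𝓝 x)) :
    ∃ F : Ordinal.{1} → X, Continuous F ∧ (∀ β, F β = x ∨ ∃ m γ, F β = f m γ) ∧ F A = x ∧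
      ∀ m γ, 0 < γ → α m + γ ≤ α (m + 1) → F (α m + γ) = f m γ := by
  classical
  have hex : ∀ β, 0 < β → β < A → ∃ m, α m < β ∧ β ≤ α (m + 1) := by
    intro β h0 hA
    have he : ∃ m, β ≤ α (m + 1) := by
      obtain ⟨m, hm⟩ := hcof β hA
      exact ⟨m, hm.le.trans (hα (Nat.lt_succ_self m)).le⟩
    refine ⟨Nat.find he, ?_, Nat.find_spec he⟩
    rcases hc : Nat.find he with _ | k
    · rw [hα0]; exact h0
    · exact not_le.1 (Nat.find_min he (m := k) (by omega))
  have huniq : ∀ β m m', α m < β → β ≤ α (m + 1) → α m' < β → β ≤ α (m' + 1) → m = m' := by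
    intro β m m' h1 h2 h3 h4
    have h5 := hα.lt_iff_lt.1 (h1.trans_le h4)
    have h6 := hα.lt_iff_lt.1 (h3.trans_le h2)
    omega
  let F : Ordinal.{1} → X := fun β =>
    if h : 0 < β ∧ β < A then f (hex β h.1 h.2).choose (β - α (hex β h.1 h.2).choose) else x
  have hFval : ∀ β m, α m < β → β ≤ α (m + 1) → F β = f m (β - α m) := by
    intro β m h1 h2
    have h : 0 < β ∧ β < A := ⟨lt_of_le_of_lt bot_le h1, h2.trans_lt (hαA _)⟩
    have hs := (hex β h.1 h.2).choose_spec
    have : (hex β h.1 h.2).choose = m := huniq β _ _ hs.1 hs.2 h1 h2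
    simp only [F, dif_pos h, this]
  have hFA : ∀ β, A ≤ β → F β = x := fun β h => by
    simp only [F]; rw [dif_neg]; exact fun hh => absurd hh.2 (not_lt.2 h)
  refine ⟨F, ?_, ?_, hFA A le_rfl, ?_⟩
  · rw [continuous_iff_continuousAt]
    intro β
    rcases (show (0 : Ordinal.{1}) ≤ β from bot_le).eq_or_lt with h0 | h0
    · subst h0
      have : Set.Iio (1 : Ordinal.{1}) ∈ 𝓝 (0 : Ordinal.{1}) := Iio_mem_nhds zero_lt_one
      have h : F =ᶠ[𝓝 0] fun _ => F 0 := by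
        filter_upwards [this] with β hβ
        rw [Order.lt_one_iff.1 (Set.mem_Iio.1 hβ)]
      exact (continuousAt_congr h).2 continuousAt_const
    rcases lt_trichotomy β A with hlt | heq | hgt
    · obtain ⟨m, h1, h2⟩ := hex β h0 hlt
      have : Set.Ioo (α m) (Order.succ (α (m + 1))) ∈ 𝓝 β :=
        Ioo_mem_nhds h1 (Order.lt_succ_iff.2 h2)
      have h : F =ᶠ[𝓝 β] fun β => f m (β - α m) := by
        filter_upwards [this] with γ hγ
        exact hFval γ m hγ.1 (Order.lt_succ_iff.1 hγ.2)
      rw [continuousAt_congr h]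
      have hsub : Continuous (fun β : Ordinal.{1} => β - α m) := by
        rw [OrderTopology.continuous_iff]
        intro c
        constructor
        · have : (fun β : Ordinal.{1} => β - α m) ⁻¹' Set.Ioi c = Set.Ioi (α m + c) := by
            ext β
            simp only [Set.mem_preimage, Set.mem_Ioi]
            exact Ordinal.lt_sub
          rw [this]; exact isOpen_Ioi
        · rcases eq_or_ne c 0 with rfl | hc
          · have : (fun β : Ordinal.{1} => β - α m) ⁻¹' Set.Iio 0 = ∅ := by
              ext β
              simp
            rw [this]; exact isOpen_empty
          · have : (fun β : Ordinal.{1} => β - α m) ⁻¹' Set.Iio c = Set.Iio (α m + c) := by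
              ext β
              simp only [Set.mem_preimage, Set.mem_Iio]
              constructor
              · intro h
                exact (Ordinal.le_add_sub _ _).trans_lt (by gcongr)
              · intro h
                exact Ordinal.sub_lt_of_lt_add h (pos_iff_ne_zero.2 hc)
            rw [this]; exact isOpen_Iio
      exact ((hf m).comp hsub).continuousAt
    · subst heq
      intro U hU
      rw [hFA β le_rfl] at hU
      have h1 := hx hU
      rw [Filter.mem_map, Filter.mem_prod_top] at h1
      obtain ⟨m0, hm0⟩ := mem_atTop_sets.1 h1
      rw [Filter.mem_map]
      filter_upwards [Ioi_mem_nhds (hαA m0)] with γ hγ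
      have hγ' : α m0 < γ := hγ
      rcases le_or_gt β γ with hle | hlt
      · show F γ ∈ U
        rw [hFA γ hle]; exact mem_of_mem_nhds hU
      · obtain ⟨m, h2, h3⟩ := hex γ (lt_of_le_of_lt bot_le hγ') hlt
        show F γ ∈ U
        rw [hFval γ m h2 h3]
        have h5 := hα.lt_iff_lt.1 (hγ'.trans_le h3)
        exact hm0 m (by omega) _
    · have h : F =ᶠ[𝓝 β] fun _ => x := by
        filter_upwards [Ioi_mem_nhds hgt] with γ hγ
        exact hFA γ (le_of_lt hγ)
      exact (continuousAt_congr h).2 continuousAt_const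
  · intro β
    by_cases h : 0 < β ∧ β < A
    · right
      obtain ⟨m, h1, h2⟩ := hex β h.1 h.2
      exact ⟨m, _, hFval β m h1 h2⟩
    · left
      simp only [F, dif_neg h]
  · intro m γ h0 h1
    rw [hFval _ m (lt_add_of_pos_right _ h0) h1, Ordinal.add_sub_cancel]

lemma tree (q : ℕ) (d : ℕ → ℝ) (Q : (ℕ → ℝ) → Prop)
    (hQ : ∀ h, Q h → ∀ k : ℕ, Q (fun j => if j < k then h j else 0)) (n : ℕ) :
    ∀ (K : ℕ) (g : ℕ → ℝ), Q g → (∀ k ≥ K, g k = 0) →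
    ∃ φ : Ordinal.{1} → (ℕ → ℝ), Continuous φ ∧ (∀ β, Q (φ β) ∧ ∀ k < K, φ β k = g k) ∧
      ∀ h, Q h → (∀ k < K, h k = g k) → (∀ k ≥ K, h k = 0 ∨ ∃ r < q, h k = d r) →
        (∃ s : Finset ℕ, s.card ≤ n ∧ ∀ k ≥ K, k ∉ s → h k = 0) →
        ∃ β, 0 < β ∧ β ≤ ω ^ (n : Ordinal.{1}) ∧ φ β = h := by
  classical
  induction n with
  | zero =>
    intro K g hg hg0
    refine ⟨fun _ => g, continuous_const, fun _ => ⟨hg, fun _ _ => rfl⟩, ?_⟩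
    rintro h hh hhg - ⟨s, hs, hs0⟩
    refine ⟨1, zero_lt_one, by simp, ?_⟩
    have : s = ∅ := Finset.card_eq_zero.1 (by omega)
    subst this
    funext k
    rcases lt_or_ge k K with hk | hk
    · exact (hhg k hk).symm
    · show g k = h k
      rw [hg0 k hk, hs0 k hk (by simp)]
  | succ n ih =>
    intro K g hg hg0
    rcases Nat.eq_zero_or_pos q with hq | hq
    · subst hq
      refine ⟨fun _ => g, continuous_const, fun _ => ⟨hg, fun _ _ => rfl⟩, ?_⟩
      rintro h hh hhg hd -
      refine ⟨1, zero_lt_one, ?_, ?_⟩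
      · exact Order.one_le_iff_pos.2 (Ordinal.opow_pos _ Ordinal.omega0_pos)
      funext k
      rcases lt_or_ge k K with hk | hk
      · exact (hhg k hk).symm
      · show g k = h k
        rw [hg0 k hk]
        rcases hd k hk with h0 | ⟨r, hr, _⟩
        · rw [h0]
        · omega
    let km : ℕ → ℕ := fun m => K + m / q
    have hKm : ∀ m, K ≤ km m := fun m => Nat.le_add_right _ _
    let gm : ℕ → ℕ → ℝ := fun m => Function.update g (km m) (d (m % q))
    have hm : ∀ m, ∃ φ : Ordinal.{1} → (ℕ → ℝ), Continuous φ ∧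
        (∀ β, Q (φ β) ∧ ∀ k < km m, φ β k = g k) ∧
        (Q (gm m) → ∀ h, Q h → (∀ k < km m + 1, h k = gm m k) →
        (∀ k ≥ km m + 1, h k = 0 ∨ ∃ r < q, h k = d r) →
        (∃ s : Finset ℕ, s.card ≤ n ∧ ∀ k ≥ km m + 1, k ∉ s → h k = 0) →
        ∃ β, 0 < β ∧ β ≤ ω ^ (n : Ordinal.{1}) ∧ φ β = h) := by
      intro m
      by_cases hQm : Q (gm m)
      · obtain ⟨φ, h1, h2, h3⟩ := ih (km m + 1) (gm m) hQm (fun k hk => by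
          simp only [gm]
          rw [Function.update_of_ne (by omega)]
          exact hg0 k (by have := hKm m; omega))
        refine ⟨φ, h1, fun β => ⟨(h2 β).1, fun k hk => ?_⟩, fun _ => h3⟩
        rw [(h2 β).2 k (by omega)]
        simp only [gm]
        rw [Function.update_of_ne (by omega)]
      · exact ⟨fun _ => g, continuous_const, fun _ => ⟨hg, fun _ _ => rfl⟩, fun h => absurd h hQm⟩
    choose f hf1 hf2 hf3 using hm
    have hωn : 0 < (ω : Ordinal.{1}) ^ (n : Ordinal.{1}) := Ordinal.opow_pos _ Ordinal.omega0_pos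
    have hω : (ω : Ordinal.{1}) ^ ((n + 1 : ℕ) : Ordinal.{1}) = ω ^ (n : Ordinal.{1}) * ω := by
      rw [Nat.cast_succ, ← Ordinal.opow_succ]; rfl
    obtain ⟨φ, hφ1, hφ2, hφ3, hφ4⟩ := glue f hf1 (fun m => ω ^ (n : Ordinal.{1}) * m)
      (ω ^ ((n + 1 : ℕ) : Ordinal.{1})) (by simp)
      (fun a b hab => by
        exact (mul_lt_mul_iff_right₀ hωn).2 (by exact_mod_cast hab))
      (fun m => by
        rw [hω]
        exact (mul_lt_mul_iff_right₀ hωn).2 (Ordinal.natCast_lt_omega0 m))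
      (fun β hβ => by
        rw [hω, Ordinal.lt_mul_iff_of_isSuccLimit Ordinal.isSuccLimit_omega0] at hβ
        obtain ⟨c, hc, hβ⟩ := hβ
        obtain ⟨m, rfl⟩ := Ordinal.lt_omega0.1 hc
        exact ⟨m, hβ⟩)
      g (by
        rw [tendsto_pi_nhds]
        intro j
        refine tendsto_const_nhds.congr' ?_
        rw [Filter.EventuallyEq, Filter.Eventually, Filter.mem_prod_top]
        filter_upwards [eventually_ge_atTop ((j + 1) * q)] with m hm γ
        refine ((hf2 m γ).2 j ?_).symm
        have : j + 1 ≤ m / q := (Nat.le_div_iff_mul_le hq).2 hm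
        simp only [km]; omega)
    refine ⟨φ, hφ1, fun β => ?_, ?_⟩
    · rcases hφ2 β with h | ⟨m, γ, h⟩
      · rw [h]; exact ⟨hg, fun _ _ => rfl⟩
      · rw [h]
        refine ⟨(hf2 m γ).1, fun k hk => (hf2 m γ).2 k ?_⟩
        have := hKm m; omega
    · rintro h hh hhg hd ⟨s, hs, hs0⟩
      by_cases hz : ∀ k ≥ K, h k = 0
      · refine ⟨ω ^ ((n + 1 : ℕ) : Ordinal.{1}), Ordinal.opow_pos _ Ordinal.omega0_pos, le_rfl, ?_⟩
        rw [hφ3]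
        funext k
        rcases lt_or_ge k K with hk | hk
        · rw [hhg k hk]
        · rw [hg0 k hk, hz k hk]
      · push Not at hz
        let k := Nat.find hz
        obtain ⟨hkK, hk0⟩ : k ≥ K ∧ h k ≠ 0 := Nat.find_spec hz
        have hkmin : ∀ j < k, j ≥ K → h j = 0 := by
          intro j hj hjK
          by_contra hne
          exact Nat.find_min hz hj ⟨hjK, hne⟩
        obtain ⟨r, hr, hdr⟩ := (hd k hkK).resolve_left hk0
        let m := (k - K) * q + r
        have hmq : m / q = k - K := by
          simp only [m]
          rw [mul_comm, Nat.mul_add_div hq, Nat.div_eq_of_lt hr, add_zero]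
        have hmr : m % q = r := by
          simp only [m]
          rw [mul_comm, Nat.mul_add_mod, Nat.mod_eq_of_lt hr]
        have hkm : km m = k := by simp only [km, hmq]; omega
        have hgm : ∀ j < k + 1, h j = gm m j := by
          intro j hj
          simp only [gm, hkm, hmr]
          rcases Nat.lt_succ_iff_lt_or_eq.1 hj with hlt | rfl
          · rw [Function.update_of_ne (by omega)]
            rcases lt_or_ge j K with hjK | hjK
            · exact hhg j hjK
            · rw [hkmin j hlt hjK, hg0 j hjK]
          · rw [Function.update_self, hdr]
        have hQgm : Q (gm m) := by
          have := hQ h hh (k + 1)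
          convert this using 1
          funext j
          split_ifs with hj
          · exact (hgm j hj).symm
          · simp only [gm, hkm]
            rw [Function.update_of_ne (by omega)]
            exact hg0 j (by omega)
        have hks : k ∈ s := by
          by_contra hns
          exact hk0 (hs0 k hkK hns)
        obtain ⟨γ, hγ0, hγ1, hγ⟩ := hf3 m hQgm h hh (by rw [hkm]; exact hgm)
          (fun j hj => hd j (by omega))
          ⟨s.erase k, by rw [Finset.card_erase_of_mem hks]; omega, fun j hj hjs => by
            refine hs0 j (by omega) fun hjs' => hjs (Finset.mem_erase.2 ⟨by omega, hjs'⟩)⟩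
        have hle : ω ^ (n : Ordinal.{1}) * (m : Ordinal.{1}) + γ ≤
            ω ^ (n : Ordinal.{1}) * ((m + 1 : ℕ) : Ordinal.{1}) := by
          rw [Nat.cast_succ, mul_add, mul_one]
          gcongr
        refine ⟨ω ^ (n : Ordinal.{1}) * m + γ, lt_of_lt_of_le hγ0 (le_add_self), hle.trans ?_, ?_⟩
        · rw [hω]
          gcongr
          exact (Ordinal.natCast_lt_omega0 _).le
        · rw [hφ4 m γ hγ0 hle, hγ]

lemma rep (q : ℕ → ℕ) (d : ℕ → ℕ → ℝ) (Q : ℕ → (ℕ → ℝ) → Prop) (n : ℕ → ℕ) (hn : ∀ i, i ≤ n i)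
    (hQ : ∀ i h, Q i h → ∀ k : ℕ, Q i (fun j => if j < k then h j else 0))
    (hQ0 : ∀ i, Q i 0) (hQb : ∀ i h, Q i h → ∀ k, |h k| ≤ (1/2)^i) :
    ∃ Φ : Ordinal.{1} → (ℕ → ℝ), Continuous Φ ∧ (∀ β, ∃ i, Q i (Φ β)) ∧
      ∀ i h, Q i h → (∀ k, h k = 0 ∨ ∃ r < q i, h k = d i r) →
        (∃ s : Finset ℕ, s.card ≤ n i ∧ ∀ k, k ∉ s → h k = 0) →
        ∃ β ≤ (ω : Ordinal.{1}) ^ (ω : Ordinal.{1}), Φ β = h := by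
  have ht := fun i => tree (q i) (d i) (Q i) (hQ i) (n i) 0 0 (hQ0 i) (fun _ _ => rfl)
  choose f hf1 hf2 hf3 using ht
  let α : ℕ → Ordinal.{1} := fun i => Nat.rec 0 (fun i a => a + ω ^ (n i : Ordinal.{1})) i
  have hα : ∀ i, α (i + 1) = α i + ω ^ (n i : Ordinal.{1}) := fun i => rfl
  have hlt : ∀ m : ℕ, (ω : Ordinal.{1}) ^ (m : Ordinal.{1}) < ω ^ (ω : Ordinal.{1}) := fun m =>
    (Ordinal.opow_lt_opow_iff_right Ordinal.one_lt_omega0).2 (Ordinal.natCast_lt_omega0 m)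
  have hαA : ∀ m, α m < ω ^ (ω : Ordinal.{1}) := by
    intro m
    induction m with
    | zero => exact Ordinal.opow_pos _ Ordinal.omega0_pos
    | succ m ih => exact Ordinal.isPrincipal_add_omega0_opow _ ih (hlt (n m))
  obtain ⟨Φ, h1, h2, h3, h4⟩ := glue f hf1 α (ω ^ (ω : Ordinal.{1})) rfl
    (strictMono_nat_of_lt_succ fun i => by
      rw [hα]; exact lt_add_of_pos_right _ (Ordinal.opow_pos _ Ordinal.omega0_pos))
    hαA
    (fun β hβ => by
      rw [Ordinal.lt_opow_of_isSuccLimit Ordinal.omega0_ne_zero Ordinal.isSuccLimit_omega0] at hβ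
      obtain ⟨c, hc, hβ⟩ := hβ
      obtain ⟨m, rfl⟩ := Ordinal.lt_omega0.1 hc
      refine ⟨m + 1, hβ.trans_le ?_⟩
      rw [hα]
      refine le_trans ?_ le_add_self
      exact Ordinal.opow_le_opow_right Ordinal.omega0_pos (by exact_mod_cast hn m))
    0 (by
      rw [tendsto_pi_nhds]
      intro j
      have hp : Tendsto (fun p : ℕ × Ordinal.{1} => ((1:ℝ)/2)^p.1) (atTop ×ˢ ⊤) (𝓝 0) :=
        (tendsto_pow_atTop_nhds_zero_of_lt_one (by norm_num) (by norm_num)).comp tendsto_fst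
      refine squeeze_zero_norm (fun p => ?_) hp
      rw [Real.norm_eq_abs]
      exact hQb p.1 _ (hf2 p.1 p.2).1 j)
  refine ⟨Φ, h1, fun β => ?_, ?_⟩
  · rcases h2 β with h | ⟨m, γ, h⟩
    · exact ⟨0, by rw [h]; exact hQ0 0⟩
    · exact ⟨m, by rw [h]; exact (hf2 m γ).1⟩
  · rintro i h hh hd ⟨s, hs, hs0⟩
    obtain ⟨γ, hγ0, hγ1, hγ⟩ := hf3 i h hh (fun k hk => absurd hk (by omega)) (fun k _ => hd k)
      ⟨s, hs, fun k _ => hs0 k⟩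
    have hle : α i + γ ≤ α (i + 1) := by
      rw [hα]; gcongr
    exact ⟨α i + γ, hle.trans (hαA (i + 1)).le, by rw [h4 i γ hγ0 hle, hγ]⟩

/-- dual boundedness -/
def Qp (M : ℝ → ℝ) (h : ℕ → ℝ) : Prop :=
  ∀ (x : ℕ → ℝ) (F : Finset ℕ), ∑ k ∈ F, M |x k| ≤ 1 → ∑ k ∈ F, |h k| * |x k| ≤ 3

lemma bound {M : ℝ → ℝ} {h a : ℕ → ℝ} {ρ : ℝ} (hρ : 0 < ρ) (hQ : Qp M h)
    (hF : ∀ F : Finset ℕ, ∑ k ∈ F, M (|a k| / ρ) ≤ 1) :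
    Summable (fun k => h k * a k) ∧ |∑' k, h k * a k| ≤ 3 * ρ := by
  have hb : ∀ F : Finset ℕ, ∑ k ∈ F, ‖h k * a k‖ ≤ 3 * ρ := by
    intro F
    have h1 := hQ (fun k => a k / ρ) F (by
      simpa only [abs_div, abs_of_pos hρ] using hF F)
    have h2 : ∑ k ∈ F, ‖h k * a k‖ = (∑ k ∈ F, |h k| * |a k / ρ|) * ρ := by
      rw [Finset.sum_mul]
      refine Finset.sum_congr rfl fun k _ => ?_
      rw [Real.norm_eq_abs, abs_mul, abs_div, abs_of_pos hρ]
      field_simp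
    rw [h2]
    gcongr
  have hs : Summable fun k => ‖h k * a k‖ := summable_of_sum_le (fun _ => norm_nonneg _) hb
  refine ⟨hs.of_norm, ?_⟩
  rw [← Real.norm_eq_abs]
  exact (norm_tsum_le_tsum_norm hs).trans (hs.tsum_le_of_sum_le hb)

lemma sum_le_of_tsum {M : ℝ → ℝ} (hM : IsOrlicz M) {a : ℕ → ℝ} (h : Mem' M a) {ρ : ℝ} (hρ : 0 < ρ)
    (h1 : ∑' k, M (|a k| / ρ) ≤ 1) (F : Finset ℕ) : ∑ k ∈ F, M (|a k| / ρ) ≤ 1 :=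
  ((h.div hρ).sum_le_tsum F (fun _ _ => M_nonneg hM (by positivity))).trans h1

lemma summ {M : ℝ → ℝ} (hM : IsOrlicz M) {h a : ℕ → ℝ} (ha : Mem' M a) (hQ : Qp M h) :
    Summable (fun k => h k * a k) := by
  obtain ⟨ρ, hρ, h1⟩ := norm_nonempty hM ha
  exact (bound hρ hQ (sum_le_of_tsum hM ha hρ h1)).1

lemma cont {M : ℝ → ℝ} (hM : IsOrlicz M) {X : Type*} [TopologicalSpace X] (Φ : X → ℕ → ℝ)
    (hΦ : Continuous Φ) (hQ : ∀ β, Qp M (Φ β)) {a : ℕ → ℝ} (ha : Mem' M a) :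
    Continuous (fun β => ∑' k, Φ β k * a k) := by
  classical
  refine continuous_of_uniform_approx_of_continuous ?_
  intro u hu
  obtain ⟨ε, hε, hεu⟩ := Metric.mem_uniformity_dist.1 hu
  have hε' : 0 < ε / 4 := by positivity
  obtain ⟨s, hs⟩ := (ha.div hε').vanishing (Metric.ball_mem_nhds (0:ℝ) one_pos)
  refine ⟨fun β => ∑ k ∈ s, Φ β k * a k, ?_, ?_⟩
  · exact continuous_finsetSum _ fun k _ => ((continuous_apply k).comp hΦ).mul continuous_const
  · intro β
    apply hεu
    have h1 := bound (M := M) (h := Φ β) (a := fun k => if k ∈ s then 0 else a k) hε' (hQ β) (by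
      intro F
      have h2 := hs (F \ s) Finset.sdiff_disjoint
      rw [Metric.mem_ball, dist_zero_right, Real.norm_eq_abs] at h2
      have h3 := (le_abs_self _).trans h2.le
      rw [← Finset.sum_sdiff (Finset.inter_subset_left : F ∩ s ⊆ F)]
      have h4 : ∑ k ∈ F ∩ s, M (|if k ∈ s then 0 else a k| / (ε / 4)) = 0 := by
        refine Finset.sum_eq_zero fun k hk => ?_
        rw [if_pos (Finset.mem_inter.1 hk).2]; simp [hM.zero]
      rw [h4, add_zero, Finset.sdiff_inter_self_left]
      refine le_trans (le_of_eq ?_) h3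
      refine Finset.sum_congr rfl fun k hk => ?_
      rw [if_neg (Finset.mem_sdiff.1 hk).2])
    have h5 : ∑' k, Φ β k * a k - ∑ k ∈ s, Φ β k * a k =
        ∑' k, Φ β k * (if k ∈ s then 0 else a k) := by
      have h6 := summ hM ha (hQ β)
      have h7 : ∑ k ∈ s, Φ β k * a k = ∑' k, (if k ∈ s then Φ β k * a k else 0) := by
        rw [tsum_eq_sum (s := s)]
        · exact Finset.sum_congr rfl fun k hk => by rw [if_pos hk]
        · intro k hk; rw [if_neg hk]
      have h8 : Summable fun k => (if k ∈ s then Φ β k * a k else 0) :=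
        summable_of_ne_finset_zero (s := s) fun k hk => by rw [if_neg hk]
      rw [h7, ← h6.tsum_sub h8]
      refine tsum_congr fun k => ?_
      split_ifs <;> simp
    rw [Real.dist_eq, h5]
    linarith [h1.2]

lemma Mem'.add {M : ℝ → ℝ} (hM : IsOrlicz M) {a b : ℕ → ℝ} (ha : Mem' M a) (hb : Mem' M b) :
    Mem' M (a + b) := by
  intro c hc
  refine Summable.of_nonneg_of_le (fun k => M_nonneg hM (by positivity)) (fun k => ?_)
    ((ha (2 * c) (by positivity)).add (hb (2 * c) (by positivity)))
  have h1 := abs_add_le (a k) (b k)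
  have n1 : 0 ≤ M (2 * c * |a k|) := M_nonneg hM (by positivity)
  have n2 : 0 ≤ M (2 * c * |b k|) := M_nonneg hM (by positivity)
  rcases le_total |a k| |b k| with h | h
  · have : M (c * |(a + b) k|) ≤ M (2 * c * |b k|) := by
      refine M_mono hM (by positivity) ?_
      rw [mul_comm 2 c, mul_assoc]
      gcongr
      simp only [Pi.add_apply]; linarith
    linarith
  · have : M (c * |(a + b) k|) ≤ M (2 * c * |a k|) := by
      refine M_mono hM (by positivity) ?_
      rw [mul_comm 2 c, mul_assoc]
      gcongr
      simp only [Pi.add_apply]; linarith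
    linarith

lemma Mem'.smul {M : ℝ → ℝ} {a : ℕ → ℝ} (ha : Mem' M a) (t : ℝ) : Mem' M (t • a) := by
  intro c hc
  have := ha (c * |t|) (by positivity)
  simpa [abs_mul, mul_assoc] using this

lemma embeds {M : ℝ → ℝ} (hM : IsOrlicz M) {α : Ordinal.{1}} (Φ : Ordinal.{1} → ℕ → ℝ)
    (hΦ : Continuous Φ) (hQ : ∀ β, Qp M (Φ β)) (c : ℝ) (hc : 0 < c)
    (hlow : ∀ a, Mem' M a → ∀ r > 0, 1 < ∑' k, M (|a k| / r) →
      ∃ β ≤ α, c * r ≤ |∑' k, Φ β k * a k|) : EmbedsHM M α := by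
  classical
  have hb : ∀ a, Mem' M a → ∀ β, |∑' k, Φ β k * a k| ≤ 3 * orliczNorm M a := by
    intro a ha β
    have : |∑' k, Φ β k * a k| / 3 ≤ orliczNorm M a := by
      refine le_csInf (norm_nonempty hM ha) ?_
      rintro ρ ⟨hρ, h1⟩
      have := (bound hρ (hQ β) (sum_le_of_tsum hM ha hρ h1)).2
      linarith
    linarith
  let T : (ℕ → ℝ) → COrd α := fun a => if ha : Mem' M a then
    BoundedContinuousFunction.ofNormedAddCommGroup (fun β : Set.Iic α => ∑' k, Φ β.1 k * a k)
      ((cont hM Φ hΦ hQ ha).comp continuous_subtype_val) (3 * orliczNorm M a)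
      (fun β => by rw [Real.norm_eq_abs]; exact hb a ha β.1) else 0
  have hT : ∀ a, Mem' M a → ∀ β, T a β = ∑' k, Φ β.1 k * a k := by
    intro a ha β
    simp only [T, dif_pos ha]
    rfl
  have hnn : ∀ a, 0 ≤ orliczNorm M a := fun a => Real.sInf_nonneg fun _ hx => hx.1.le
  refine ⟨T, ?_, ?_, c, hc, 3, by norm_num, ?_⟩
  · intro a b ha hb
    have ha := MemHM.mem' ha
    have hb := MemHM.mem' hb
    ext β
    rw [BoundedContinuousFunction.add_apply, hT _ (ha.add hM hb), hT _ ha, hT _ hb,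
      ← (summ hM ha (hQ _)).tsum_add (summ hM hb (hQ _))]
    refine tsum_congr fun k => ?_
    simp [mul_add]
  · intro t a ha
    have ha := MemHM.mem' ha
    ext β
    rw [BoundedContinuousFunction.smul_apply, hT _ (ha.smul t), hT _ ha, _root_.smul_eq_mul,
      ← tsum_mul_left]
    refine tsum_congr fun k => ?_
    simp [mul_left_comm]
  · intro a ha
    have ha := MemHM.mem' ha
    constructor
    · rw [mul_comm, ← le_div_iff₀ hc]
      refine le_of_forall_lt fun r hr => ?_
      by_contra! hle
      have hr0 : 0 ≤ r := le_trans (by positivity) hle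
      obtain ⟨r', h1, h2⟩ := exists_between hr
      have hr' : 0 < r' := hr0.trans_lt h1
      obtain ⟨β, hβ, h3⟩ := hlow a ha r' hr' (by
        by_contra! h
        exact absurd (norm_le hr' h) (not_le.2 h2))
      have h4 := (T a).norm_coe_le_norm ⟨β, hβ⟩
      rw [hT a ha, Real.norm_eq_abs] at h4
      rw [div_le_iff₀ hc] at hle
      nlinarith
    · rw [BoundedContinuousFunction.norm_le (by have := hnn a; positivity)]
      intro β
      rw [hT a ha, Real.norm_eq_abs]
      exact hb a ha _

lemma two_to_three : (Ordinal.omega0.{1} ^ Ordinal.omega0.{1}) < omega1 := by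
  have h : Ordinal.omega0.{1} < omega1 := by
    rw [omega1, Cardinal.lt_ord, Ordinal.card_omega0]
    exact Cardinal.aleph0_lt_aleph_one
  exact Ordinal.isPrincipal_opow_ord (Cardinal.aleph0_le_aleph 1) h h
lemma scale {M : ℝ → ℝ} (hM : IsOrlicz M) {η : ℝ} (hη : 0 < η)
    (h : Tendsto (fun t => M (η * t) / M t) (𝓝[>] (0 : ℝ)) (𝓝 0)) (i : ℕ) :
    ∃ τ : ℝ, 0 < τ ∧ τ ≤ 1 ∧ τ ≤ (1/2)^i ∧ ∀ t, 0 < t → t ≤ τ →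
      M (η * t) ≤ (1/2)^(i+1) * M t ∧ M t ≤ (1/2)^i * t := by
  set ε : ℝ := min ((1/2)^(i+1)) ((1/2)^i * η) with hεd
  have hε : 0 < ε := by positivity
  have h1 := h.eventually (gt_mem_nhds hε)
  rw [eventually_nhdsWithin_iff, Metric.eventually_nhds_iff] at h1
  obtain ⟨δ, hδ, h2⟩ := h1
  have h3 : ∀ t, 0 < t → t < δ → M (η * t) ≤ ε * M t := by
    intro t ht htδ
    have := h2 (y := t) (by rw [Real.dist_eq, _root_.sub_zero, abs_of_pos ht]; exact htδ) ht
    rw [div_lt_iff₀ (hM.pos t ht)] at this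
    exact this.le
  refine ⟨min (min 1 ((1/2)^i)) (min (δ / 2) (min (η * (δ / 2)) η)), by positivity,
    (min_le_left _ _).trans (min_le_left _ _), (min_le_left _ _).trans (min_le_right _ _), ?_⟩
  intro t ht htτ
  simp only [le_min_iff] at htτ
  obtain ⟨⟨_, _⟩, h4, h5, h6⟩ := htτ
  have hMt := hM.pos t ht
  constructor
  · refine (h3 t ht (by linarith)).trans ?_
    gcongr
    exact min_le_left _ _
  · have ht' : 0 < t / η := by positivity
    have h7 := h3 (t / η) ht' (by rw [div_lt_iff₀ hη]; nlinarith)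
    rw [mul_div_cancel₀ _ hη.ne'] at h7
    have h8 := M_le hM ht'.le ((div_le_one hη).2 h6)
    calc M t ≤ ε * M (t / η) := h7
      _ ≤ ((1/2)^i * η) * (t / η) := by
        gcongr
        · exact M_nonneg hM ht'.le
        · exact min_le_right _ _
      _ = _ := by field_simp

lemma subsum (F : Finset ℕ) (w : ℕ → ℝ) (hw : ∀ k ∈ F, w k ≤ 1) (h : 1 < ∑ k ∈ F, w k) :
    ∃ S ⊆ F, 1 < ∑ k ∈ S, w k ∧ ∑ k ∈ S, w k ≤ 2 := by
  classical
  induction F using Finset.induction_on with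
  | empty => simp at h; linarith
  | insert k F hk ih =>
    by_cases h1 : 1 < ∑ k ∈ F, w k
    · obtain ⟨S, hS, h2⟩ := ih (fun j hj => hw j (Finset.mem_insert_of_mem hj)) h1
      exact ⟨S, hS.trans (Finset.subset_insert _ _), h2⟩
    · refine ⟨insert k F, subset_rfl, h, ?_⟩
      rw [Finset.sum_insert hk]
      have := hw k (Finset.mem_insert_self _ _)
      linarith

lemma young {M : ℝ → ℝ} (hM : IsOrlicz M) {b y : ℝ} (hb : 0 < b) (hy : 0 ≤ y) :
    M b / b * y ≤ M y + M b := by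
  have h1 := M_nonneg hM hy
  have h2 := hM.pos b hb
  rcases le_total y b with h | h
  · have : M b / b * y ≤ M b / b * b := by gcongr
    rw [div_mul_cancel₀ _ hb.ne'] at this
    linarith
  · have hy' : 0 < y := by linarith
    have h3 := M_smul hM (s := b / y) (t := y) (by positivity) ((div_le_one hy').2 h) hy
    rw [div_mul_cancel₀ _ hy'.ne', div_mul_eq_mul_div, le_div_iff₀ hy'] at h3
    have : M b / b * y ≤ M y := by
      rw [div_mul_eq_mul_div, div_le_iff₀ hb]; linarith
    linarith

lemma pow_near {u : ℝ} (hu : 0 < u) (hu1 : u ≤ 1) :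
    ∃ e : ℕ, (1/2 : ℝ)^e < u ∧ u ≤ 2 * (1/2)^e := by
  obtain ⟨n, h1, h2⟩ := exists_nat_pow_near_of_lt_one hu hu1 (y := 1/2) (by norm_num) (by norm_num)
  refine ⟨n + 1, h1, h2.trans (le_of_eq ?_)⟩
  rw [pow_succ]; ring

/-- sign -/
noncomputable def sg (t : ℝ) : ℝ := if 0 ≤ t then 1 else -1

lemma sg_mul (t : ℝ) : sg t * t = |t| := by
  unfold sg
  split_ifs with h
  · rw [abs_of_nonneg h, one_mul]
  · rw [abs_of_neg (not_le.1 h)]; ring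

lemma abs_sg (t : ℝ) : |sg t| = 1 := by
  unfold sg
  split_ifs <;> simp

lemma select {M : ℝ → ℝ} (hM : IsOrlicz M) {η : ℝ} (hη : 0 < η) (τ : ℕ → ℝ)
    (h0 : ∀ i, 0 < τ i) (h1 : ∀ i, τ i ≤ 1) (h2 : ∀ i, τ i ≤ (1/2)^i)
    (h3 : ∀ i t, 0 < t → t ≤ τ i → M (η * t) ≤ (1/2)^(i+1) * M t ∧ M t ≤ (1/2)^i * t)
    (l n : ℕ → ℕ) (hl : ∀ i, (1/2 : ℝ)^(l i) < M (τ (i+1)) / 2) (hn : ∀ i, 2 / M (τ (i+1)) ≤ n i)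
    (hn1 : ∀ i, 1 ≤ n i)
    {a : ℕ → ℝ} (ha : Mem' M a) {r : ℝ} (hr : 0 < r) (har : 1 < ∑' k, M (|a k| / r)) :
    ∃ i h, Qp M h ∧ (∀ k, |h k| ≤ (1/2)^i) ∧
      (∀ k, h k = 0 ∨ ∃ e < l i + 1, h k = (1/2)^e ∨ h k = -(1/2)^e) ∧
      (∃ s : Finset ℕ, s.card ≤ n i ∧ ∀ k, k ∉ s → h k = 0) ∧
      min (η * τ 0) (η / 2) * r ≤ |∑' k, h k * a k| := by
  classical
  have hsg : ∀ t (e : ℕ), sg t * (1/2)^e = (1/2 : ℝ)^e ∨ sg t * (1/2)^e = -(1/2 : ℝ)^e := by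
    intro t e
    unfold sg
    split_ifs
    · left; ring
    · right; ring
  by_cases hA : ∃ k, η * τ 0 < |a k| / r
  · obtain ⟨k, hk⟩ := hA
    refine ⟨0, fun j => if j = k then sg (a k) else 0, ?_, ?_, ?_, ⟨{k}, ?_, ?_⟩, ?_⟩
    · intro x F hF
      have h5 : ∑ j ∈ F, |if j = k then sg (a k) else 0| * |x j| =
          ∑ j ∈ F, if j = k then |x k| else 0 := by
        refine Finset.sum_congr rfl fun j _ => ?_
        split_ifs with h
        · rw [abs_sg, one_mul, h]
        · simp
      rw [h5, Finset.sum_ite_eq']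
      split_ifs with hkF
      · have h6 : M |x k| ≤ 1 := (Finset.single_le_sum (f := fun j => M |x j|)
          (fun j _ => M_nonneg hM (abs_nonneg _)) hkF).trans hF
        by_contra! h7
        have := M_ge hM (t := |x k|) (by linarith)
        linarith
      · norm_num
    · intro j
      dsimp only
      split_ifs
      · rw [abs_sg]; simp
      · simp
    · intro j
      dsimp only
      split_ifs
      · right
        refine ⟨0, by omega, ?_⟩
        simpa using hsg (a k) 0
      · left; rfl
    · simpa using hn1 0
    · intro j hj
      exact if_neg (by simpa using hj)
    · dsimp only
      rw [tsum_eq_single k (fun j hj => by rw [if_neg hj, zero_mul]), if_pos rfl, sg_mul, abs_abs]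
      rw [lt_div_iff₀ hr] at hk
      refine le_trans ?_ hk.le
      gcongr
      exact min_le_left _ _
  · push Not at hA
    obtain ⟨F0, hF0⟩ : ∃ F : Finset ℕ, 1 < ∑ k ∈ F, M (|a k| / r) := by
      by_contra! h
      exact absurd ((ha.div hr).tsum_le_of_sum_le h) (not_le.2 har)
    set x : ℕ → ℝ := fun k => |a k| / r with hx
    let F := F0.filter (fun k => a k ≠ 0)
    have hF : 1 < ∑ k ∈ F, M (x k) := by
      refine hF0.trans_le (le_of_eq ?_)
      refine (Finset.sum_filter_of_ne ?_).symm
      intro k _ hne h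
      apply hne
      simp [h, hM.zero]
    have hxpos : ∀ k ∈ F, 0 < x k := fun k hk => by
      have := (Finset.mem_filter.1 hk).2
      simp only [hx]; positivity
    have hex : ∀ k ∈ F, ∃ i, η * τ (i+1) < x k := by
      intro k hk
      have hp := hxpos k hk
      obtain ⟨i, hi⟩ := exists_pow_lt_of_lt_one (show 0 < x k / η by positivity)
        (show (1/2 : ℝ) < 1 by norm_num)
      refine ⟨i, ?_⟩
      rw [lt_div_iff₀ hη] at hi
      have h5 : τ (i+1) ≤ (1/2)^i := (h2 (i+1)).trans (pow_le_pow_of_le_one (by norm_num) (by norm_num) (by omega))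
      nlinarith
    have hex' : ∀ k, ∃ i, k ∈ F → η * τ (i+1) < x k ∧ x k ≤ η * τ i := by
      intro k
      by_cases hk : k ∈ F
      · refine ⟨Nat.find (hex k hk), fun _ => ⟨Nat.find_spec (hex k hk), ?_⟩⟩
        rcases hc : Nat.find (hex k hk) with _ | j
        · exact hA k
        · exact not_lt.1 (Nat.find_min (hex k hk) (m := j) (by omega))
      · exact ⟨0, fun h => absurd h hk⟩
    choose ι hι using hex'
    obtain ⟨i, hi⟩ : ∃ i, (1/2 : ℝ)^(i+1) < ∑ k ∈ F with ι k = i, M (x k) := by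
      by_contra! hcon
      have h5 : ∑ i ∈ F.image ι, ∑ k ∈ F with ι k = i, M (x k) = ∑ k ∈ F, M (x k) :=
        Finset.sum_fiberwise_of_maps_to (fun k hk => Finset.mem_image_of_mem ι hk) _
      have h6 : ∑ i ∈ F.image ι, ∑ k ∈ F with ι k = i, M (x k) ≤
          ∑ i ∈ F.image ι, (1/2 : ℝ)^(i+1) := Finset.sum_le_sum fun i _ => hcon i
      have h7 : ∑ i ∈ F.image ι, (1/2 : ℝ)^(i+1) = 1/2 * ∑ i ∈ F.image ι, (1/2 : ℝ)^i := by
        rw [Finset.mul_sum]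
        exact Finset.sum_congr rfl fun i _ => by rw [pow_succ]; ring
      have h8 := sum_half_le (F.image ι)
      linarith
    let b : ℕ → ℝ := fun k => x k / η
    have hxb : ∀ k, x k = η * b k := fun k => by simp only [b]; field_simp
    have hG : ∀ k ∈ F.filter (fun k => ι k = i), 0 < b k ∧ τ (i+1) < b k ∧ b k ≤ τ i := by
      intro k hk
      obtain ⟨hkF, hki⟩ := Finset.mem_filter.1 hk
      have h5 := hι k hkF
      rw [hki] at h5
      refine ⟨div_pos (hxpos k hkF) hη, ?_, ?_⟩
      · simp only [b]; rw [lt_div_iff₀ hη]; linarith [h5.1]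
      · simp only [b]; rw [div_le_iff₀ hη]; linarith [h5.2]
    have hsum : 1 < ∑ k ∈ F with ι k = i, M (b k) := by
      have h5 : ∑ k ∈ F with ι k = i, M (x k) ≤ (1/2)^(i+1) * ∑ k ∈ F with ι k = i, M (b k) := by
        rw [Finset.mul_sum]
        refine Finset.sum_le_sum fun k hk => ?_
        rw [hxb k]
        exact (h3 i (b k) (hG k hk).1 (hG k hk).2.2).1
      have h6 := hi.trans_le h5
      have h7 : (0:ℝ) < (1/2)^(i+1) := by positivity
      by_contra! h8
      have := mul_le_mul_of_nonneg_left h8 h7.le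
      linarith
    obtain ⟨S, hSF, hS1, hS2⟩ := subsum _ (fun k => M (b k)) (fun k hk => by
      have := hG k hk
      have h4 := h1 i
      exact (M_le hM this.1.le (by linarith)).trans (by linarith)) hsum
    have hb : ∀ k ∈ S, 0 < b k ∧ τ (i+1) < b k ∧ b k ≤ τ i := fun k hk => hG k (hSF hk)
    have hMb : ∀ k ∈ S, M (b k) / b k ≤ (1/2)^i := fun k hk => by
      rw [div_le_iff₀ (hb k hk).1]
      exact (h3 i (b k) (hb k hk).1 (hb k hk).2.2).2
    have hP : 0 < M (τ (i+1)) := hM.pos _ (h0 _)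
    have hPb : ∀ k ∈ S, M (τ (i+1)) ≤ M (b k) := fun k hk =>
      M_mono hM (h0 _).le (hb k hk).2.1.le
    have hee : ∀ k, ∃ e : ℕ, k ∈ S → (1/2 : ℝ)^e < M (b k) / b k ∧ M (b k) / b k ≤ 2 * (1/2)^e := by
      intro k
      by_cases hk : k ∈ S
      · obtain ⟨e, he⟩ := pow_near (u := M (b k) / b k) (div_pos (hM.pos _ (hb k hk).1) (hb k hk).1)
          ((hMb k hk).trans (pow_le_one₀ (by norm_num) (by norm_num)))
        exact ⟨e, fun _ => he⟩
      · exact ⟨0, fun h => absurd h hk⟩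
    choose e he using hee
    have hel : ∀ k ∈ S, e k < l i := by
      intro k hk
      by_contra! hle
      have h5 : (1/2 : ℝ)^(e k) ≤ (1/2)^(l i) := pow_le_pow_of_le_one (by norm_num) (by norm_num) hle
      have h6 : M (b k) ≤ M (b k) / b k := by
        rw [le_div_iff₀ (hb k hk).1]
        have := M_nonneg hM (hb k hk).1.le
        have h7 : b k ≤ 1 := (hb k hk).2.2.trans (h1 i)
        nlinarith
      have := (he k hk).2
      have := hPb k hk
      have := hl i
      linarith
    refine ⟨i, fun k => if k ∈ S then sg (a k) * (1/2)^(e k) else 0, ?_, ?_, ?_, ⟨S, ?_, ?_⟩, ?_⟩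
    · intro y G hG1
      calc ∑ k ∈ G, |if k ∈ S then sg (a k) * (1/2)^(e k) else 0| * |y k|
          ≤ ∑ k ∈ G, (M |y k| + if k ∈ S then M (b k) else 0) := by
            refine Finset.sum_le_sum fun k _ => ?_
            split_ifs with hk
            · rw [abs_mul, abs_sg, one_mul, abs_of_pos (by positivity)]
              refine le_trans ?_ (young hM (hb k hk).1 (abs_nonneg (y k)))
              gcongr
              exact (he k hk).1.le
            · simpa using M_nonneg hM (abs_nonneg (y k))
        _ = ∑ k ∈ G, M |y k| + ∑ k ∈ G, (if k ∈ S then M (b k) else 0) := Finset.sum_add_distrib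
        _ ≤ 1 + 2 := by
          gcongr
          rw [Finset.sum_ite_mem]
          refine le_trans (Finset.sum_le_sum_of_subset_of_nonneg Finset.inter_subset_right ?_) hS2
          intro k hk _
          exact M_nonneg hM (hb k hk).1.le
        _ = 3 := by norm_num
    · intro k
      dsimp only
      split_ifs with hk
      · rw [abs_mul, abs_sg, one_mul, abs_of_pos (by positivity)]
        exact (he k hk).1.le.trans (hMb k hk)
      · simp
    · intro k
      dsimp only
      split_ifs with hk
      · right
        exact ⟨e k, by have := hel k hk; omega, hsg _ _⟩
      · left; rfl
    · have h5 : (S.card : ℝ) * M (τ (i+1)) ≤ 2 := by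
        refine le_trans ?_ hS2
        rw [← _root_.nsmul_eq_mul]
        exact Finset.card_nsmul_le_sum S _ _ hPb
      have h6 : (S.card : ℝ) ≤ n i := by
        refine le_trans ?_ (hn i)
        rw [le_div_iff₀ hP]; exact h5
      exact_mod_cast h6
    · intro k hk
      exact if_neg hk
    · have h5 : ∑' k, (if k ∈ S then sg (a k) * (1/2)^(e k) else 0) * a k =
          ∑ k ∈ S, (1/2)^(e k) * |a k| := by
        rw [tsum_eq_sum (s := S) (fun k hk => by rw [if_neg hk, zero_mul])]
        refine Finset.sum_congr rfl fun k hk => ?_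
        rw [if_pos hk, ← sg_mul]; ring
      rw [h5]
      refine le_trans ?_ (le_abs_self _)
      have h6 : ∀ k ∈ S, η / 2 * r * M (b k) ≤ (1/2)^(e k) * |a k| := by
        intro k hk
        have h7 : |a k| = r * η * b k := by
          simp only [b, hx]; field_simp
        have h8 := (he k hk).2
        rw [div_le_iff₀ (hb k hk).1] at h8
        rw [h7]
        have h9 : 0 < r * η := by positivity
        nlinarith
      calc min (η * τ 0) (η / 2) * r ≤ η / 2 * r * 1 := by
            rw [mul_one]; gcongr; exact min_le_right _ _
        _ ≤ η / 2 * r * ∑ k ∈ S, M (b k) := by gcongr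
        _ = ∑ k ∈ S, η / 2 * r * M (b k) := Finset.mul_sum _ _ _
        _ ≤ _ := Finset.sum_le_sum h6

lemma Qp_trunc {M : ℝ → ℝ} {h : ℕ → ℝ} (hQ : Qp M h) (k : ℕ) :
    Qp M (fun j => if j < k then h j else 0) := by
  intro x F hF
  refine le_trans (Finset.sum_le_sum fun j _ => ?_) (hQ x F hF)
  refine mul_le_mul_of_nonneg_right ?_ (abs_nonneg _)
  dsimp only
  split_ifs
  · exact le_rfl
  · simp

lemma one_to_two {M : ℝ → ℝ} (hM : IsOrlicz M)
    (h : ∃ η > (0 : ℝ), Tendsto (fun t => M (η * t) / M t) (𝓝[>] (0 : ℝ)) (𝓝 0)) :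
    EmbedsHM M (Ordinal.omega0 ^ Ordinal.omega0) := by
  obtain ⟨η, hη, h⟩ := h
  choose τ h0 h1 h2 h3 using scale hM hη h
  have hP : ∀ i, 0 < M (τ (i+1)) := fun i => hM.pos _ (h0 _)
  have hl := fun i => exists_pow_lt_of_lt_one (show 0 < M (τ (i+1)) / 2 from half_pos (hP i))
    (show (1/2 : ℝ) < 1 by norm_num)
  choose l hl using hl
  let n : ℕ → ℕ := fun i => ⌈2 / M (τ (i+1))⌉₊ + i + 1
  obtain ⟨Φ, hΦ1, hΦ2, hΦ3⟩ := rep (fun i => 2 * (l i + 1))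
    (fun _ r => if r % 2 = 0 then (1/2)^(r/2) else -(1/2)^(r/2))
    (fun i h => Qp M h ∧ ∀ k, |h k| ≤ (1/2)^i) n (fun i => by simp only [n]; omega)
    (fun i h hh k => ⟨Qp_trunc hh.1 k, fun j => by
      dsimp only
      split_ifs
      · exact hh.2 j
      · simp⟩)
    (fun i => ⟨fun x F _ => by simp, fun k => by simp⟩) (fun i h hh => hh.2)
  refine embeds hM Φ hΦ1 (fun β => by obtain ⟨i, hi⟩ := hΦ2 β; exact hi.1)
    (min (η * τ 0) (η / 2)) (lt_min (mul_pos hη (h0 0)) (half_pos hη)) ?_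
  intro a ha r hr har
  obtain ⟨i, g, g1, g2, g3, g4, g5⟩ := select hM hη τ h0 h1 h2 h3 l n hl
    (fun i => (Nat.le_ceil _).trans (by simp only [n]; exact_mod_cast (by omega)))
    (fun i => by simp only [n]; omega) ha hr har
  obtain ⟨β, hβ, hβg⟩ := hΦ3 i g ⟨g1, g2⟩ (fun k => by
    rcases g3 k with hk | ⟨e, he, hk | hk⟩
    · exact Or.inl hk
    · refine Or.inr ⟨2 * e, by omega, ?_⟩
      rw [if_pos (by omega), hk]
      congr 1; omega
    · refine Or.inr ⟨2 * e + 1, by omega, ?_⟩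
      rw [if_neg (by omega), hk]
      congr 2; omega) g4
  exact ⟨β, hβ, by rw [hβg]; exact g5⟩
end OrlE

/-- For a nondegenerate Orlicz function `M`, the following are equivalent:
(1) there is `η > 0` with `lim_{t→0} M(ηt)/M(t) = 0`;
(2) `h_M` embeds isomorphically into `C(ω^ω)`;
(3) `h_M` embeds isomorphically into `C(α)` for some countable ordinal `α`. -/
theorem orlicz_embedding_tfae (M : ℝ → ℝ) (hM : IsOrlicz M) :
    ((∃ η > (0 : ℝ), Tendsto (fun t => M (η * t) / M t) (𝓝[>] (0 : ℝ)) (𝓝 0)) ↔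
      EmbedsHM M (Ordinal.omega0 ^ Ordinal.omega0)) ∧
    (EmbedsHM M (Ordinal.omega0 ^ Ordinal.omega0) ↔
      ∃ α : Ordinal, α < omega1 ∧ EmbedsHM M α) := by
  exact ⟨⟨OrlE.one_to_two hM, fun h => OrlE.three_to_one hM OrlE.two_to_three h⟩,
    ⟨fun h => ⟨_, OrlE.two_to_three, h⟩, fun ⟨_, hα, h⟩ =>
      OrlE.one_to_two hM (OrlE.three_to_one hM hα h)⟩⟩
end
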